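/- arXiv:math/9501221 — 2 statements merged into one kernel-verified Lean document; each statement's English description precedes it below -/
import Mathlib

section
/- Fix k ≥ 1 and let p̄ = (p(1), p(2), …) be a sequence with 0 ≤ p(i) < 1 for all i such that ∏_{i=1}^n (1 − p(i)) ≥ n^{−1/(10k)} for all n. Let H be a graph with vertex set [k] that is admissible for p̄. Then the probability that G(n,p̄) contains at least n^{0.1} pairwise vertex-disjoint exact copies of H, none of which contains a vertex smaller than log n or larger than n − log n, tends to 1 as n → ∞. -/
open FirstOrder Filter

namespace RandomGraph

/-- The set of potential edges of a graph on `Fin n` (pairs `(v,w)` with `v < w`).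
Vertex `v : Fin n` represents the number `v + 1` of the interval `[n] = {1, …, n}`. -/
abbrev EdgeIdx (n : ℕ) := {e : Fin n × Fin n // e.1 < e.2}

/-- An outcome of the random graph on `[n]`: a choice of which potential edges are present. -/
abbrev Sample (n : ℕ) := EdgeIdx n → Bool

/-- Adjacency of two vertices (described by their values in `Fin n`) in the outcome `ω`. -/
def adjVal {n : ℕ} (ω : Sample n) (a b : ℕ) : Prop :=
  ∃ e : EdgeIdx n, ω e = true ∧
    ((e.1.1.val = a ∧ e.1.2.val = b) ∨ (e.1.1.val = b ∧ e.1.2.val = a))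

/-- Adjacency of two vertices in the outcome `ω`. -/
def sampleAdj {n : ℕ} (ω : Sample n) (v w : Fin n) : Prop := adjVal ω v.val w.val

/-- The probability of the outcome `ω` in the model `G(n, p̄)`: each pair of distinct
vertices at distance `d` is an edge with probability `p d`, independently.  (The value `p 0` is
never used, since distinct vertices are at distance at least 1.) -/
noncomputable def sampleWeight (p : ℕ → ℝ) {n : ℕ} (ω : Sample n) : ℝ :=
  ∏ e : EdgeIdx n,
    (if ω e then p (e.1.2.val - e.1.1.val) else 1 - p (e.1.2.val - e.1.1.val))

/-- The probability of the outcome `ω` in the circular model `C(n, p̄)`: vertices `v, w` are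
adjacent with probability `p (min |v-w| (n - |v-w|))`, independently. -/
noncomputable def cWeight (p : ℕ → ℝ) {n : ℕ} (ω : Sample n) : ℝ :=
  ∏ e : EdgeIdx n,
    (if ω e then p (min (e.1.2.val - e.1.1.val) (n - (e.1.2.val - e.1.1.val)))
      else 1 - p (min (e.1.2.val - e.1.1.val) (n - (e.1.2.val - e.1.1.val))))

open scoped Classical in
/-- The probability of the event `P` in the random graph `G(n, p̄)`. -/
noncomputable def Pr (p : ℕ → ℝ) (n : ℕ) (P : Sample n → Prop) : ℝ :=
  ∑ ω : Sample n, if P ω then sampleWeight p ω else 0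

open scoped Classical in
/-- The probability of the event `P` in the circular random graph `C(n, p̄)`. -/
noncomputable def cPr (p : ℕ → ℝ) (n : ℕ) (P : Sample n → Prop) : ℝ :=
  ∑ ω : Sample n, if P ω then cWeight p ω else 0

/-! ### The language `L` of graphs (also used as the language `L^c`) -/

/-- An outcome `ω` of the random graph, viewed as a structure of `FirstOrder.Language.graph`,
the language with a single binary adjacency predicate. -/
def graphStructure {n : ℕ} (ω : Sample n) : Language.graph.Structure (Fin n) where
  RelMap | .adj => fun x => sampleAdj ω (x 0) (x 1)

/-- Satisfaction of a sentence of the language `L` in the outcome `ω`. -/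
def SatL {n : ℕ} (ω : Sample n) (ψ : Language.graph.Sentence) : Prop :=
  @Language.Sentence.Realize _ _ (graphStructure ω) ψ

/-- `Prob(n, p̄; ψ)` for a sentence `ψ` of the language `L`. -/
noncomputable def ProbL (p : ℕ → ℝ) (n : ℕ) (ψ : Language.graph.Sentence) : ℝ :=
  Pr p n fun ω => SatL ω ψ

/-- The probability that `C(n, p̄)` satisfies a sentence `ψ` of the language `L^c = L`. -/
noncomputable def cProbL (p : ℕ → ℝ) (n : ℕ) (ψ : Language.graph.Sentence) : ℝ :=
  cPr p n fun ω => SatL ω ψ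

/-! ### The language `L₊` -/

/-- The constants of the language `L₊`: the first element `1` and the last element `n`. -/
inductive plusFunc : ℕ → Type
  | one : plusFunc 0
  | last : plusFunc 0

/-- The relations of `L₊`: adjacency and successor. -/
inductive plusRel : ℕ → Type
  | adj : plusRel 2
  | succ : plusRel 2

/-- The language `L₊` with adjacency, successor (`x = y + 1`), and constants `1` and `n`. -/
def Lplus : Language := ⟨plusFunc, plusRel⟩

/-- An outcome `ω` of the random graph on `[m+1]`, as an `L₊`-structure. -/
def plusStructure {m : ℕ} (ω : Sample (m + 1)) : Lplus.Structure (Fin (m + 1)) where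
  funMap | .one => fun _ => 0 | .last => fun _ => Fin.last m
  RelMap
    | .adj => fun x => sampleAdj ω (x 0) (x 1)
    | .succ => fun x => (x 0).val = (x 1).val + 1

/-- `Prob(n, p̄; ψ)` for a sentence `ψ` of `L₊` (set to `0` in the irrelevant case `n = 0`,
where the constants cannot be interpreted). -/
noncomputable def ProbPlus (p : ℕ → ℝ) : ℕ → Lplus.Sentence → ℝ
  | 0, _ => 0
  | (m + 1), ψ => Pr p (m + 1) fun ω => @Language.Sentence.Realize _ _ (plusStructure ω) ψ

/-! ### The language `L≤` -/

/-- The relations of `L≤`: adjacency and linear order. -/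
inductive leRel : ℕ → Type
  | adj : leRel 2
  | le : leRel 2

/-- The language `L≤` with adjacency and a linear order. -/
def Lle : Language := ⟨fun _ => Empty, leRel⟩

/-- An outcome `ω` of the random graph on `[n]`, as an `L≤`-structure. -/
def leStructure {n : ℕ} (ω : Sample n) : Lle.Structure (Fin n) where
  funMap := fun f _ => Empty.elim f
  RelMap
    | .adj => fun x => sampleAdj ω (x 0) (x 1)
    | .le => fun x => x 0 ≤ x 1

/-- Satisfaction of a sentence of `L≤` in the outcome `ω`. -/
def SatLe {n : ℕ} (ω : Sample n) (ψ : Lle.Sentence) : Prop :=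
  @Language.Sentence.Realize _ _ (leStructure ω) ψ

/-- `Prob(n, p̄; ψ)` for a sentence `ψ` of `L≤`. -/
noncomputable def ProbLe (p : ℕ → ℝ) (n : ℕ) (ψ : Lle.Sentence) : ℝ :=
  Pr p n fun ω => SatLe ω ψ

/-! ### The circular languages `L₊^c` and `L≤^c` -/

/-- The relations of `L₊^c`: adjacency and cyclic successor. -/
inductive plusCRel : ℕ → Type
  | adj : plusCRel 2
  | succ : plusCRel 2

/-- The language `L₊^c`, with adjacency and cyclic successor (`x = y + 1 (mod n)`). -/
def LplusC : Language := ⟨fun _ => Empty, plusCRel⟩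

/-- An outcome `ω` of the circular random graph on `[n]`, as an `L₊^c`-structure. -/
def plusCStructure {n : ℕ} (ω : Sample n) : LplusC.Structure (Fin n) where
  funMap := fun f _ => Empty.elim f
  RelMap
    | .adj => fun x => sampleAdj ω (x 0) (x 1)
    | .succ => fun x => (x 0).val = ((x 1).val + 1) % n

/-- The probability that `C(n, p̄)` satisfies a sentence `ψ` of the language `L₊^c`. -/
noncomputable def cProbPlus (p : ℕ → ℝ) (n : ℕ) (ψ : LplusC.Sentence) : ℝ :=
  cPr p n fun ω => @Language.Sentence.Realize _ _ (plusCStructure ω) ψ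

/-- The relations of `L≤^c`: adjacency and the ternary clockwise-order predicate. -/
inductive cycRel : ℕ → Type
  | adj : cycRel 2
  | btw : cycRel 3

/-- The language `L≤^c`, with adjacency and the ternary clockwise-order predicate `C`. -/
def Lcyc : Language := ⟨fun _ => Empty, cycRel⟩

/-- `C(a, b, c)`: `a ≤ b ≤ c` holds after some cyclic permutation of `(a, b, c)`. -/
def cyclicBtw {n : ℕ} (a b c : Fin n) : Prop :=
  (a ≤ b ∧ b ≤ c) ∨ (b ≤ c ∧ c ≤ a) ∨ (c ≤ a ∧ a ≤ b)

/-- An outcome `ω` of the circular random graph on `[n]`, as an `L≤^c`-structure. -/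
def cycStructure {n : ℕ} (ω : Sample n) : Lcyc.Structure (Fin n) where
  funMap := fun f _ => Empty.elim f
  RelMap
    | .adj => fun x => sampleAdj ω (x 0) (x 1)
    | .btw => fun x => cyclicBtw (x 0) (x 1) (x 2)

/-- Satisfaction of a sentence of `L≤^c` in the outcome `ω`. -/
def SatCyc {n : ℕ} (ω : Sample n) (ψ : Lcyc.Sentence) : Prop :=
  @Language.Sentence.Realize _ _ (cycStructure ω) ψ

/-- The probability that `C(n, p̄)` satisfies a sentence `ψ` of the language `L≤^c`. -/
noncomputable def cProbCyc (p : ℕ → ℝ) (n : ℕ) (ψ : Lcyc.Sentence) : ℝ :=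
  cPr p n fun ω => SatCyc ω ψ


/-- `H` (a graph on `[k]`) has an exact copy in the outcome `ω` (a graph on `[n]`) occupying
the vertices `i+1, …, i+k` of `[n]`: the copy induces the same adjacencies as `H`, and no
edge of `ω` has exactly one endpoint among these vertices.  (Vertices are identified with
their values: vertex `v : Fin n` has value `v`, representing the number `v + 1 ∈ [n]`.) -/
def IsExactCopyAt {k n : ℕ} (H : Sample k) (ω : Sample n) (i : ℕ) : Prop :=
  i + k ≤ n ∧
  (∀ a b : ℕ, a < k → b < k → (adjVal H a b ↔ adjVal ω (i + a) (i + b))) ∧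
  (∀ v w : ℕ, adjVal ω v w → ((i ≤ v ∧ v < i + k) ↔ (i ≤ w ∧ w < i + k)))

section Helpers

/-- Cylinder weight factor. -/
noncomputable def fac {E : Type*} (q : E → ℝ) (e : E) (b : Bool) : ℝ :=
  if b then q e else 1 - q e

theorem cyl_sum {E : Type*} [Fintype E] [DecidableEq E] (q : E → ℝ) (F : Finset E)
    (τ : E → Bool) (P : (E → Bool) → Prop) [DecidablePred P] (hP : ∀ ω, P ω ↔ ∀ e ∈ F, ω e = τ e) :
    ∑ ω : E → Bool, (if P ω then ∏ e, fac q e (ω e) else 0) = ∏ e ∈ F, fac q e (τ e) := by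
  have h1 : ∀ ω : E → Bool, (if P ω then ∏ e, fac q e (ω e) else 0)
      = ∏ e, (if e ∈ F ∧ ω e ≠ τ e then 0 else fac q e (ω e)) := by
    intro ω
    by_cases h : ∀ e ∈ F, ω e = τ e
    · rw [if_pos ((hP ω).2 h)]
      refine Finset.prod_congr rfl fun e _ => ?_
      rw [if_neg]
      rintro ⟨h1, h2⟩
      exact h2 (h e h1)
    · rw [if_neg (fun h' => h ((hP ω).1 h'))]
      push Not at h
      obtain ⟨e, he, hne⟩ := h
      symm
      exact Finset.prod_eq_zero (Finset.mem_univ e) (if_pos ⟨he, hne⟩)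
  rw [Finset.sum_congr rfl fun ω _ => h1 ω]
  have h2 := Finset.prod_univ_sum (fun _ : E => (Finset.univ : Finset Bool))
    (fun e b => if e ∈ F ∧ b ≠ τ e then 0 else fac q e b)
  rw [Fintype.piFinset_univ] at h2
  rw [← h2, ← Finset.prod_filter_mul_prod_filter_not Finset.univ (fun e => e ∈ F)]
  have h3 : ∏ e ∈ Finset.univ.filter (fun e => ¬ e ∈ F),
      ∑ b : Bool, (if e ∈ F ∧ b ≠ τ e then 0 else fac q e b) = 1 := by
    refine Finset.prod_eq_one fun e he => ?_
    simp only [Finset.mem_filter, Finset.mem_univ, true_and] at he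
    simp [he, fac]
  rw [h3, mul_one, Finset.filter_univ_mem]
  refine Finset.prod_congr rfl fun e he => ?_
  cases h : τ e <;> simp [he]

theorem prod_inj_le {A B : Type*} [DecidableEq B] (s : Finset A) (t : Finset B) (f : A → B)
    (hf : ∀ a ∈ s, f a ∈ t) (hinj : ∀ a ∈ s, ∀ a' ∈ s, f a = f a' → a = a')
    (h : A → ℝ) (g : B → ℝ) (hg0 : ∀ b ∈ t, 0 ≤ g b) (hg1 : ∀ b ∈ t, g b ≤ 1)
    (hgh : ∀ a ∈ s, g (f a) ≤ h a) : ∏ b ∈ t, g b ≤ ∏ a ∈ s, h a := by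
  have h1 : ∏ b ∈ s.image f, g b ≤ ∏ a ∈ s, h a := by
    rw [Finset.prod_image (fun a ha a' ha' => hinj a ha a' ha')]
    exact Finset.prod_le_prod (fun a ha => hg0 _ (hf a ha)) fun a ha => hgh a ha
  have hsub : s.image f ⊆ t := by
    intro b hb
    obtain ⟨a, ha, rfl⟩ := Finset.mem_image.1 hb
    exact hf a ha
  refine le_trans ?_ h1
  rw [← Finset.prod_sdiff hsub]
  refine mul_le_of_le_one_left (Finset.prod_nonneg fun b hb => hg0 b (hsub hb)) ?_
  exact Finset.prod_le_one (fun b hb => hg0 b (Finset.sdiff_subset hb))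
    (fun b hb => hg1 b (Finset.sdiff_subset hb))

theorem cheb {Ω : Type*} [Fintype Ω] (w X : Ω → ℝ) (hw : ∀ ω, 0 ≤ w ω) (hw1 : ∑ ω, w ω = 1)
    (m v : ℝ) (hm0 : 0 < m) (hm : ∑ ω, w ω * X ω = m) (hv : ∑ ω, w ω * X ω ^ 2 ≤ m ^ 2 + v)
    (P : Ω → Prop) [DecidablePred P] (hP : ∀ ω, m / 2 ≤ X ω → P ω) :
    1 - 4 * v / m ^ 2 ≤ ∑ ω, if P ω then w ω else 0 := by
  have h1 : ∀ ω, w ω * (1 - 4 / m ^ 2 * (X ω - m) ^ 2) ≤ if P ω then w ω else 0 := by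
    intro ω
    have hpos : 0 ≤ 4 / m ^ 2 * (X ω - m) ^ 2 := by positivity
    split_ifs with h
    · exact mul_le_of_le_one_right (hw ω) (by linarith)
    · have hX : X ω < m / 2 := by
        by_contra hc
        exact h (hP ω (not_lt.1 hc))
      have h2 : 1 ≤ 4 / m ^ 2 * (X ω - m) ^ 2 := by
        rw [div_mul_eq_mul_div, le_div_iff₀ (by positivity)]
        nlinarith
      exact mul_nonpos_of_nonneg_of_nonpos (hw ω) (by linarith)
  have h2 : ∑ ω, w ω * (1 - 4 / m ^ 2 * (X ω - m) ^ 2)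
      = 1 - 4 / m ^ 2 * (∑ ω, w ω * X ω ^ 2 - m ^ 2) := by
    have : ∀ ω, w ω * (1 - 4 / m ^ 2 * (X ω - m) ^ 2) = w ω - (4 / m ^ 2 * (w ω * X ω ^ 2)
        - 4 / m ^ 2 * (2 * m) * (w ω * X ω) + 4 / m ^ 2 * m ^ 2 * w ω) := by
      intro ω; ring
    rw [Finset.sum_congr rfl fun ω _ => this ω, Finset.sum_sub_distrib, Finset.sum_add_distrib,
      Finset.sum_sub_distrib, ← Finset.mul_sum, ← Finset.mul_sum, ← Finset.mul_sum, hm, hw1]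
    ring
  calc 1 - 4 * v / m ^ 2 = 1 - 4 / m ^ 2 * v := by ring
    _ ≤ 1 - 4 / m ^ 2 * (∑ ω, w ω * X ω ^ 2 - m ^ 2) := by
      have : 0 ≤ 4 / m ^ 2 := by positivity
      have := mul_le_mul_of_nonneg_left (show ∑ ω, w ω * X ω ^ 2 - m ^ 2 ≤ v by linarith) this
      linarith
    _ = _ := h2.symm
    _ ≤ _ := Finset.sum_le_sum fun ω _ => h1 ω

/-- Second moment method for events, with at most `K` bad partners of each index. -/
theorem second_moment {Ω ι : Type*} [Fintype Ω] (w : Ω → ℝ) (hw : ∀ ω, 0 ≤ w ω)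
    (hw1 : ∑ ω, w ω = 1) (T : Finset ι) (A : ι → Ω → Prop) [∀ i, DecidablePred (A i)]
    (Q : ι → ℝ) (hQ : ∀ i ∈ T, ∑ ω, (if A i ω then w ω else 0) = Q i)
    (bad : ι → ι → Prop) [∀ i, DecidablePred (bad i)] (K η : ℝ) (hη : 0 ≤ η)
    (hK : ∀ i ∈ T, ((T.filter (bad i)).card : ℝ) ≤ K)
    (hgood : ∀ i ∈ T, ∀ j ∈ T, ¬ bad i j →
      ∑ ω, (if A i ω ∧ A j ω then w ω else 0) ≤ (1 + η) * (Q i * Q j))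
    (m : ℝ) (hm0 : 0 < m) (hm : ∑ i ∈ T, Q i = m)
    (P : Ω → Prop) [DecidablePred P] (hP : ∀ ω, m / 2 ≤ ((T.filter (fun i => A i ω)).card : ℝ) → P ω) :
    1 - 4 * (K / m + η) ≤ ∑ ω, if P ω then w ω else 0 := by
  have hQ0 : ∀ i ∈ T, 0 ≤ Q i := by
    intro i hi
    rw [← hQ i hi]
    refine Finset.sum_nonneg fun ω _ => ?_
    split_ifs
    · exact hw ω
    · exact le_rfl
  have hX : ∀ ω, ((T.filter (fun i => A i ω)).card : ℝ) = ∑ i ∈ T, if A i ω then 1 else 0 := by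
    intro ω; simp
  have h1 : ∑ ω, w ω * ((T.filter (fun i => A i ω)).card : ℝ) = m := by
    simp_rw [hX, Finset.mul_sum]
    rw [Finset.sum_comm, ← hm]
    refine Finset.sum_congr rfl fun i hi => ?_
    rw [← hQ i hi]
    refine Finset.sum_congr rfl fun ω _ => ?_
    simp
  have h2 : ∑ ω, w ω * ((T.filter (fun i => A i ω)).card : ℝ) ^ 2
      = ∑ i ∈ T, ∑ j ∈ T, ∑ ω, (if A i ω ∧ A j ω then w ω else 0) := by
    simp_rw [hX, sq, Finset.sum_mul_sum, Finset.mul_sum]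
    rw [Finset.sum_comm]
    refine Finset.sum_congr rfl fun i hi => ?_
    rw [Finset.sum_comm]
    refine Finset.sum_congr rfl fun j hj => ?_
    refine Finset.sum_congr rfl fun ω _ => ?_
    by_cases ha : A i ω <;> by_cases hb : A j ω <;> simp [ha, hb]
  have h3 : ∀ i ∈ T, ∑ j ∈ T, ∑ ω, (if A i ω ∧ A j ω then w ω else 0)
      ≤ K * Q i + (1 + η) * (Q i * m) := by
    intro i hi
    have h4 : ∀ j ∈ T, ∑ ω, (if A i ω ∧ A j ω then w ω else 0)
        ≤ (if bad i j then Q i else 0) + (1 + η) * (Q i * Q j) := by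
      intro j hj
      have h5 : 0 ≤ (1 + η) * (Q i * Q j) :=
        mul_nonneg (by linarith) (mul_nonneg (hQ0 i hi) (hQ0 j hj))
      split_ifs with hb
      · have : ∑ ω, (if A i ω ∧ A j ω then w ω else 0) ≤ Q i := by
          rw [← hQ i hi]
          refine Finset.sum_le_sum fun ω _ => ?_
          by_cases ha : A i ω <;> by_cases hb : A j ω <;> simp [ha, hb, hw]
        linarith
      · have := hgood i hi j hj hb
        linarith
    refine (Finset.sum_le_sum h4).trans ?_
    rw [Finset.sum_add_distrib, ← Finset.mul_sum, ← Finset.mul_sum, hm, ← Finset.sum_filter,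
      Finset.sum_const, nsmul_eq_mul]
    have := mul_le_mul_of_nonneg_right (hK i hi) (hQ0 i hi)
    linarith
  have h6 : ∑ ω, w ω * ((T.filter (fun i => A i ω)).card : ℝ) ^ 2
      ≤ m ^ 2 + (K * m + η * m ^ 2) := by
    rw [h2]
    refine (Finset.sum_le_sum h3).trans ?_
    rw [Finset.sum_add_distrib, ← Finset.mul_sum, ← Finset.mul_sum, ← Finset.sum_mul, hm]
    apply le_of_eq; ring
  have := cheb w _ hw hw1 m _ hm0 h1 h6 P hP
  refine le_trans (le_of_eq ?_) this
  field_simp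

/-- edge probability -/
noncomputable def eq' (p : ℕ → ℝ) (n : ℕ) (e : EdgeIdx n) : ℝ := p (e.1.2.val - e.1.1.val)

theorem sampleWeight_eq (p : ℕ → ℝ) {n : ℕ} (ω : Sample n) :
    sampleWeight p ω = ∏ e, fac (eq' p n) e (ω e) := rfl

/-- `v` lies in the block. -/
abbrev inb (k i v : ℕ) : Prop := i ≤ v ∧ v < i + k

/-- edges touching the block -/
def blockE (k n i : ℕ) : Finset (EdgeIdx n) :=
  Finset.univ.filter fun e => inb k i e.1.1.val ∨ inb k i e.1.2.val

open scoped Classical in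
/-- pattern of the block -/
noncomputable def pat {k : ℕ} (n : ℕ) (H : Sample k) (i : ℕ) (e : EdgeIdx n) : Bool :=
  decide (inb k i e.1.1.val ∧ inb k i e.1.2.val ∧ adjVal H (e.1.1.val - i) (e.1.2.val - i))

theorem adjVal_symm {n : ℕ} (ω : Sample n) (a b : ℕ) : adjVal ω a b ↔ adjVal ω b a := by
  unfold adjVal
  constructor <;> rintro ⟨e, h1, h2⟩ <;> exact ⟨e, h1, h2.symm⟩

theorem adjVal_edge {n : ℕ} (ω : Sample n) (e : EdgeIdx n) :
    adjVal ω e.1.1.val e.1.2.val ↔ ω e = true := by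
  constructor
  · rintro ⟨e', h1, h2⟩
    have ha := e.2
    have hb := e'.2
    rw [Fin.lt_def] at ha hb
    rcases h2 with ⟨h2, h3⟩ | ⟨h2, h3⟩
    · have : e' = e := Subtype.ext (Prod.ext (Fin.ext h2) (Fin.ext h3))
      rwa [← this]
    · omega
  · intro h
    exact ⟨e, h, Or.inl ⟨rfl, rfl⟩⟩

theorem adjVal_lt {n : ℕ} (ω : Sample n) {a b : ℕ} (h : adjVal ω a b) : a ≠ b := by
  obtain ⟨e, h1, h2⟩ := h
  have ha := e.2
  rw [Fin.lt_def] at ha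
  omega

theorem exact_of_cyl {k n : ℕ} (H : Sample k) (ω : Sample n) (i : ℕ) (hi : i + k ≤ n)
    (h : ∀ e ∈ blockE k n i, ω e = pat n H i e) : IsExactCopyAt H ω i := by
  have key : ∀ a b : ℕ, a < b → b < k → (adjVal H a b ↔ adjVal ω (i + a) (i + b)) := by
    intro a b hab hb
    let e : EdgeIdx n := ⟨(⟨i + a, by omega⟩, ⟨i + b, by omega⟩), by
      rw [Fin.lt_def]; simp only; omega⟩
    have he : e ∈ blockE k n i := by
      simp only [blockE, Finset.mem_filter, Finset.mem_univ, true_and, e, inb]; omega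
    have h1 := h e he
    have h2 := adjVal_edge ω e
    rw [h1] at h2
    simp only [pat, decide_eq_true_eq] at h2
    have h3 : e.1.1.val = i + a := rfl
    have h4 : e.1.2.val = i + b := rfl
    rw [h3, h4, Nat.add_sub_cancel_left, Nat.add_sub_cancel_left] at h2
    rw [h2]
    constructor
    · intro h; exact ⟨by unfold inb; omega, by unfold inb; omega, h⟩
    · intro h; exact h.2.2
  refine ⟨hi, ?_, ?_⟩
  · intro a b ha hb
    rcases lt_trichotomy a b with hab | hab | hab
    · exact key a b hab hb
    · subst hab
      exact ⟨fun h => absurd rfl (adjVal_lt _ h), fun h => absurd rfl (adjVal_lt _ h)⟩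
    · rw [adjVal_symm H, adjVal_symm ω]
      exact key b a hab ha
  · have key2 : ∀ e : EdgeIdx n, ω e = true → (inb k i e.1.1.val ↔ inb k i e.1.2.val) := by
      intro e he
      by_cases hm : e ∈ blockE k n i
      · have h1 := h e hm
        rw [he] at h1
        have h2 := h1.symm
        simp only [pat, decide_eq_true_eq] at h2
        exact ⟨fun _ => h2.2.1, fun _ => h2.1⟩
      · simp only [blockE, Finset.mem_filter, Finset.mem_univ, true_and, not_or] at hm
        exact ⟨fun h => absurd h hm.1, fun h => absurd h hm.2⟩
    rintro v w ⟨e, he, ⟨rfl, rfl⟩ | ⟨rfl, rfl⟩⟩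
    · exact key2 e he
    · exact (key2 e he).symm

/-- the probability of the cylinder -/
noncomputable def cylP (p : ℕ → ℝ) {k : ℕ} (n : ℕ) (H : Sample k) (i : ℕ) : ℝ :=
  ∏ e ∈ blockE k n i, fac (eq' p n) e (pat n H i e)

theorem fac_nonneg (p : ℕ → ℝ) (hp : ∀ i, 0 ≤ p i ∧ p i < 1) (n : ℕ) (e : EdgeIdx n) (b : Bool) :
    0 ≤ fac (eq' p n) e b := by
  have := hp (e.1.2.val - e.1.1.val)
  unfold fac eq'
  split_ifs <;> linarith

theorem fac_le_one (p : ℕ → ℝ) (hp : ∀ i, 0 ≤ p i ∧ p i < 1) (n : ℕ) (e : EdgeIdx n) (b : Bool) :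
    fac (eq' p n) e b ≤ 1 := by
  have := hp (e.1.2.val - e.1.1.val)
  unfold fac eq'
  split_ifs <;> linarith

theorem cylP_lower (p : ℕ → ℝ) (hp : ∀ i, 0 ≤ p i ∧ p i < 1) {k : ℕ} (n : ℕ) (H : Sample k)
    (i : ℕ) :
    sampleWeight p H * (∏ d ∈ Finset.Icc 1 n, (1 - p d)) ^ (2 * k) ≤ cylP p n H i := by
  classical
  unfold cylP
  rw [← Finset.prod_filter_mul_prod_filter_not (blockE k n i)
    (fun e => inb k i e.1.1.val ∧ inb k i e.1.2.val)]
  have hin : sampleWeight p H ≤ ∏ e ∈ (blockE k n i).filter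
      (fun e => inb k i e.1.1.val ∧ inb k i e.1.2.val), fac (eq' p n) e (pat n H i e) := by
    rw [sampleWeight_eq, ← Finset.prod_attach ((blockE k n i).filter _)]
    refine prod_inj_le _ _ (fun e : {x // x ∈ (blockE k n i).filter
      (fun e => inb k i e.1.1.val ∧ inb k i e.1.2.val)} => (⟨(⟨e.1.1.1.val - i, ?_⟩, ⟨e.1.1.2.val - i, ?_⟩), ?_⟩ : EdgeIdx k))
      (fun _ _ => Finset.mem_univ _) ?_ _ _ (fun e _ => fac_nonneg p hp _ e _)
          (fun e _ => fac_le_one p hp _ e _) ?_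
    · have := (Finset.mem_filter.1 e.2).2
      unfold inb at this; omega
    · have := (Finset.mem_filter.1 e.2).2
      unfold inb at this; omega
    · have := (Finset.mem_filter.1 e.2).2
      have h2 := e.1.2
      unfold inb at this; rw [Fin.lt_def] at h2 ⊢; simp only; omega
    · rintro ⟨e, he⟩ _ ⟨e', he'⟩ _ h
      have h1 := (Finset.mem_filter.1 he).2
      have h2 := (Finset.mem_filter.1 he').2
      unfold inb at h1 h2
      simp only [Subtype.mk.injEq, Prod.mk.injEq, Fin.mk.injEq] at h
      refine Subtype.ext (Subtype.ext (Prod.ext (Fin.ext ?_) (Fin.ext ?_))) <;> simp only <;> omega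
    · rintro ⟨e, he⟩ _
      have h1 := (Finset.mem_filter.1 he).2
      apply le_of_eq
      have h3 : pat n H i e = H ⟨(⟨e.1.1.val - i, by unfold inb at h1; omega⟩,
          ⟨e.1.2.val - i, by unfold inb at h1; omega⟩), by
            have h2 := e.2
            unfold inb at h1; rw [Fin.lt_def] at h2 ⊢; simp only; omega⟩ := by
        rw [Bool.eq_iff_iff, ← adjVal_edge H]
        unfold pat; rw [decide_eq_true_eq]
        exact ⟨fun h => h.2.2, fun h => ⟨h1.1, h1.2, h⟩⟩
      simp only [h3, fac, eq']
      have h4 : e.1.2.val - i - (e.1.1.val - i) = e.1.2.val - e.1.1.val := by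
        unfold inb at h1; omega
      rw [h4]
  have hout : (∏ d ∈ Finset.Icc 1 n, (1 - p d)) ^ (2 * k) ≤ ∏ e ∈ (blockE k n i).filter
      (fun e => ¬ (inb k i e.1.1.val ∧ inb k i e.1.2.val)), fac (eq' p n) e (pat n H i e) := by
    have h1 : (∏ d ∈ Finset.Icc 1 n, (1 - p d)) ^ (2 * k)
        = ∏ x ∈ Finset.range k ×ˢ ((Finset.univ : Finset Bool) ×ˢ Finset.Icc 1 n),
          (1 - p x.2.2) := by
      rw [Finset.prod_product]
      simp only [Finset.prod_product, Finset.prod_const, Finset.card_range, Finset.card_univ,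
        Fintype.card_bool]
      rw [← pow_mul]
    rw [h1]
    refine prod_inj_le _ _ (fun e => if inb k i e.1.1.val then
      (e.1.1.val - i, true, e.1.2.val - e.1.1.val) else
      (e.1.2.val - i, false, e.1.2.val - e.1.1.val)) ?_ ?_ _ _ ?_ ?_ ?_
    · intro e he
      simp only [Finset.mem_filter, blockE, Finset.mem_univ, true_and] at he
      have h2 := e.2
      have h3 := e.1.2.2
      rw [Fin.lt_def] at h2
      split_ifs with h
      · simp only [Finset.mem_product, Finset.mem_range, Finset.mem_univ, Finset.mem_Icc, true_and]
        unfold inb at h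
        omega
      · simp only [Finset.mem_product, Finset.mem_range, Finset.mem_univ, Finset.mem_Icc, true_and]
        unfold inb at h he
        omega
    · intro e he e' he' h
      simp only [Finset.mem_filter, blockE, Finset.mem_univ, true_and] at he he'
      have h2 := e.2
      have h2' := e'.2
      rw [Fin.lt_def] at h2 h2'
      refine (Subtype.ext (Prod.ext (Fin.ext ?_) (Fin.ext ?_))) <;>
      · split_ifs at h with hc hd hd <;> simp only [Prod.mk.injEq] at h <;>
          unfold inb at * <;> grind
    · intro x _
      linarith [(hp x.2.2).2]
    · intro x _
      linarith [(hp x.2.2).1]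
    · intro e he
      have he := (Finset.mem_filter.1 he).2
      have h3 : pat n H i e = false := by
        simp only [pat, decide_eq_false_iff_not]
        exact fun h => he ⟨h.1, h.2.1⟩
      rw [h3]
      apply le_of_eq
      split_ifs <;> simp [fac, eq']
  refine mul_le_mul hin hout (pow_nonneg (Finset.prod_nonneg fun d _ => ?_) _)
    (Finset.prod_nonneg fun e _ => fac_nonneg p hp _ e _)
  linarith [(hp d).2]

theorem joint_le (p : ℕ → ℝ) (hp : ∀ i, 0 ≤ p i ∧ p i < 1) {k : ℕ} (n : ℕ) (H : Sample k)
    (i j : ℕ) (hij : i + k ≤ j ∨ j + k ≤ i) (δ η : ℝ) (hδ0 : 0 ≤ δ) (hδ : δ < 1)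
    (hη : 1 ≤ (1 + η) * (1 - δ) ^ (k * k)) (hη0 : 0 ≤ η)
    (hgood : ∀ e ∈ blockE k n i ∩ blockE k n j, eq' p n e ≤ δ)
    (P : Sample n → Prop) [DecidablePred P]
    (hP : ∀ ω, P ω ↔ (∀ e ∈ blockE k n i, ω e = pat n H i e) ∧
      (∀ e ∈ blockE k n j, ω e = pat n H j e)) :
    ∑ ω, (if P ω then sampleWeight p ω else 0) ≤ (1 + η) * (cylP p n H i * cylP p n H j) := by
  classical
  have hdis : ∀ v, inb k i v → inb k j v → False := by
    intro v; unfold inb; omega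
  have hpi : ∀ e ∈ blockE k n i ∩ blockE k n j, pat n H i e = false ∧ pat n H j e = false := by
    intro e he
    simp only [Finset.mem_inter, blockE, Finset.mem_filter, Finset.mem_univ, true_and] at he
    simp only [pat, decide_eq_false_iff_not]
    constructor
    · rintro ⟨h1, h2, -⟩
      rcases he.2 with h | h
      exacts [hdis _ h1 h, hdis _ h2 h]
    · rintro ⟨h1, h2, -⟩
      rcases he.1 with h | h
      exacts [hdis _ h h1, hdis _ h h2]
  let τ : EdgeIdx n → Bool := fun e => if e ∈ blockE k n i then pat n H i e else pat n H j e
  have hτi : ∀ e ∈ blockE k n i, τ e = pat n H i e := fun e he => if_pos he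
  have hτj : ∀ e ∈ blockE k n j, τ e = pat n H j e := by
    intro e he
    by_cases h : e ∈ blockE k n i
    · have := hpi e (Finset.mem_inter.2 ⟨h, he⟩)
      rw [hτi e h, this.1, this.2]
    · exact if_neg h
  have hsum : ∑ ω, (if P ω then sampleWeight p ω else 0)
      = ∏ e ∈ blockE k n i ∪ blockE k n j, fac (eq' p n) e (τ e) := by
    simp only [sampleWeight_eq]
    apply cyl_sum
    intro ω
    rw [hP]
    constructor
    · rintro ⟨h1, h2⟩ e he
      rcases Finset.mem_union.1 he with he | he
      · rw [h1 e he, hτi e he]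
      · rw [h2 e he, hτj e he]
    · intro h
      refine ⟨fun e he => ?_, fun e he => ?_⟩
      · rw [h e (Finset.mem_union_left _ he), hτi e he]
      · rw [h e (Finset.mem_union_right _ he), hτj e he]
  have hui := Finset.prod_union_inter (s₁ := blockE k n i) (s₂ := blockE k n j)
    (f := fun e => fac (eq' p n) e (τ e))
  rw [← hsum] at hui
  have e1 : ∏ e ∈ blockE k n i, fac (eq' p n) e (τ e) = cylP p n H i :=
    Finset.prod_congr rfl fun e he => by rw [hτi e he]
  have e2 : ∏ e ∈ blockE k n j, fac (eq' p n) e (τ e) = cylP p n H j :=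
    Finset.prod_congr rfl fun e he => by rw [hτj e he]
  rw [e1, e2] at hui
  have hlow : (1 - δ) ^ (k * k) ≤ ∏ e ∈ blockE k n i ∩ blockE k n j, fac (eq' p n) e (τ e) := by
    have h1 : (1 - δ) ^ (k * k) = ∏ _x ∈ Finset.range k ×ˢ Finset.range k, (1 - δ) := by
      simp
    rw [h1]
    refine prod_inj_le _ _ (fun e => if inb k i e.1.1.val then
      (e.1.1.val - i, e.1.2.val - j) else (e.1.2.val - i, e.1.1.val - j)) ?_ ?_ _ _ ?_ ?_ ?_
    · intro e he
      simp only [Finset.mem_inter, blockE, Finset.mem_filter, Finset.mem_univ, true_and] at he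
      split_ifs with h <;> simp only [Finset.mem_product, Finset.mem_range] <;>
        unfold inb at * <;> omega
    · intro e he e' he' h
      simp only [Finset.mem_inter, blockE, Finset.mem_filter, Finset.mem_univ, true_and] at he he'
      have h2 := e.2
      have h2' := e'.2
      rw [Fin.lt_def] at h2 h2'
      have : e.1.1.val = e'.1.1.val ∧ e.1.2.val = e'.1.2.val := by
        split_ifs at h with hc hd hd <;> simp only [Prod.mk.injEq] at h <;>
          unfold inb at * <;> omega
      exact (Subtype.ext (Prod.ext (Fin.ext this.1) (Fin.ext this.2)))
    · intro _ _; linarith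
    · intro _ _; linarith
    · intro e he
      have h1 := hgood e he
      rw [hτi e (Finset.mem_inter.1 he).1, (hpi e he).1]
      simp only [fac, Bool.false_eq_true, if_false]
      linarith
  have hS0 : 0 ≤ ∑ ω, (if P ω then sampleWeight p ω else 0) := by
    rw [hsum]
    exact Finset.prod_nonneg fun e _ => fac_nonneg p hp _ e _
  rw [← hui]
  set S := ∑ ω, (if P ω then sampleWeight p ω else 0)
  set R := ∏ e ∈ blockE k n i ∩ blockE k n j, fac (eq' p n) e (τ e)
  have h3 : 1 ≤ (1 + η) * R := hη.trans (mul_le_mul_of_nonneg_left hlow (by linarith))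
  nlinarith [mul_le_mul_of_nonneg_left h3 hS0]

theorem bad_dist_card (k : ℕ) (hk : 1 ≤ k) (p : ℕ → ℝ) (hp : ∀ i, 0 ≤ p i ∧ p i < 1)
    (n : ℕ) (hn : 1 ≤ n)
    (hprod : (n : ℝ) ^ ((-1 : ℝ) / (10 * (k : ℝ))) ≤ ∏ i ∈ Finset.Icc 1 n, (1 - p i))
    (δ : ℝ) (hδ : 0 < δ) (B : Finset ℕ) (hB : ∀ d ∈ B, d ∈ Finset.Icc 1 n ∧ δ < p d) :
    (B.card : ℝ) ≤ Real.log n / δ := by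
  have hn' : (1 : ℝ) ≤ n := by exact_mod_cast hn
  have hk' : (1 : ℝ) ≤ k := by exact_mod_cast hk
  have h1 : ∏ i ∈ Finset.Icc 1 n, (1 - p i) ≤ Real.exp (-(δ * B.card)) := by
    calc ∏ i ∈ Finset.Icc 1 n, (1 - p i) ≤ ∏ i ∈ Finset.Icc 1 n, Real.exp (-p i) := by
          refine Finset.prod_le_prod (fun i _ => by linarith [(hp i).2]) fun i _ => ?_
          linarith [Real.add_one_le_exp (-p i)]
      _ = Real.exp (-∑ i ∈ Finset.Icc 1 n, p i) := by
          rw [← Real.exp_sum, Finset.sum_neg_distrib]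
      _ ≤ _ := by
          apply Real.exp_le_exp.2
          apply neg_le_neg
          calc δ * B.card = ∑ d ∈ B, δ := by simp [mul_comm]
            _ ≤ ∑ d ∈ B, p d := Finset.sum_le_sum fun d hd => (hB d hd).2.le
            _ ≤ _ := Finset.sum_le_sum_of_subset_of_nonneg (fun d hd => (hB d hd).1)
                fun d _ _ => (hp d).1
  have h2 := hprod.trans h1
  rw [Real.rpow_def_of_pos (by linarith), Real.exp_le_exp] at h2
  have hl : 0 ≤ Real.log n := Real.log_nonneg hn'
  have h3 : Real.log n * (-1 / (10 * (k : ℝ))) = - (Real.log n / (10 * k)) := by ring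
  have h4 : Real.log n / (10 * k) ≤ Real.log n := div_le_self hl (by linarith)
  rw [le_div_iff₀ hδ]
  linarith

open scoped Classical in
theorem bad_card (k : ℕ) (hk : 1 ≤ k) (p : ℕ → ℝ) (hp : ∀ i, 0 ≤ p i ∧ p i < 1)
    (n : ℕ) (hn : 1 ≤ n)
    (hprod : (n : ℝ) ^ ((-1 : ℝ) / (10 * (k : ℝ))) ≤ ∏ i ∈ Finset.Icc 1 n, (1 - p i))
    (δ : ℝ) (hδ : 0 < δ) (T : Finset ℕ) (a : ℕ) :
    ((T.filter fun b => a = b ∨ ∃ e ∈ blockE k n (k * a) ∩ blockE k n (k * b), δ < eq' p n e).card : ℝ)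
      ≤ 1 + 2 * (k : ℝ) ^ 2 * (Real.log n / δ) := by
  set B := (Finset.Icc 1 n).filter (fun d => δ < p d) with hBdef
  have hB := bad_dist_card k hk p hp n hn hprod δ hδ B (fun d hd => Finset.mem_filter.1 hd)
  let D := Finset.range k ×ˢ (Finset.range k ×ˢ B)
  let U : Finset ℕ := {a} ∪ (D.image (fun x => (k * a + x.1 - x.2.2 - x.2.1) / k) ∪
    D.image (fun x => (k * a + x.1 + x.2.2 - x.2.1) / k))
  have hsub : (T.filter fun b => a = b ∨
      ∃ e ∈ blockE k n (k * a) ∩ blockE k n (k * b), δ < eq' p n e) ⊆ U := by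
    intro b hb
    by_cases hab : a = b
    · subst hab; simp [U]
    obtain ⟨e, he, hde⟩ := (Finset.mem_filter.1 hb).2.resolve_left hab
    have hdis : k * a + k ≤ k * b ∨ k * b + k ≤ k * a := by
      rcases lt_or_gt_of_ne hab with h | h
      · left; nlinarith
      · right; nlinarith
    simp only [Finset.mem_inter, blockE, Finset.mem_filter, Finset.mem_univ, true_and] at he
    have h2 := e.2
    have h3 := e.1.2.2
    rw [Fin.lt_def] at h2
    have hd : e.1.2.val - e.1.1.val ∈ B := by
      simp only [hBdef, Finset.mem_filter, Finset.mem_Icc]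
      exact ⟨by omega, hde⟩
    apply Finset.mem_union_right
    by_cases hc : inb k (k * a) e.1.1.val
    · apply Finset.mem_union_right
      refine Finset.mem_image.2 ⟨(e.1.1.val - k * a, e.1.2.val - k * b, e.1.2.val - e.1.1.val), ?_, ?_⟩
      · simp only [D, Finset.mem_product, Finset.mem_range]
        refine ⟨?_, ?_, hd⟩ <;> unfold inb at * <;> omega
      · apply Nat.div_eq_of_eq_mul_right (by omega)
        simp only
        unfold inb at *; omega
    · apply Finset.mem_union_left
      refine Finset.mem_image.2 ⟨(e.1.2.val - k * a, e.1.1.val - k * b, e.1.2.val - e.1.1.val), ?_, ?_⟩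
      · simp only [D, Finset.mem_product, Finset.mem_range]
        refine ⟨?_, ?_, hd⟩ <;> unfold inb at * <;> omega
      · apply Nat.div_eq_of_eq_mul_right (by omega)
        simp only
        unfold inb at *; omega
  have hD : D.card = k * (k * B.card) := by simp [D]
  have hU : U.card ≤ 1 + (D.card + D.card) := by
    refine (Finset.card_union_le _ _).trans ?_
    refine add_le_add (by simp) ((Finset.card_union_le _ _).trans ?_)
    exact add_le_add Finset.card_image_le Finset.card_image_le
  have h4 := (Finset.card_le_card hsub).trans hU
  have h5 : ((T.filter fun b => a = b ∨ ∃ e ∈ blockE k n (k * a) ∩ blockE k n (k * b),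
      δ < eq' p n e).card : ℝ) ≤ 1 + 2 * (k : ℝ) ^ 2 * B.card := by
    rw [hD] at h4
    have : ((T.filter fun b => a = b ∨ ∃ e ∈ blockE k n (k * a) ∩ blockE k n (k * b),
      δ < eq' p n e).card : ℝ) ≤ ((1 + (k * (k * B.card) + k * (k * B.card)) : ℕ) : ℝ) := by
      exact_mod_cast h4
    refine this.trans (le_of_eq ?_)
    push_cast; ring
  refine h5.trans ?_
  have := mul_le_mul_of_nonneg_left hB (show 0 ≤ 2 * (k : ℝ) ^ 2 by positivity)
  linarith

theorem total_one (p : ℕ → ℝ) (n : ℕ) : ∑ ω : Sample n, sampleWeight p ω = 1 := by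
  have := cyl_sum (eq' p n) ∅ (fun _ => true) (fun _ => True) (by simp)
  simpa [sampleWeight_eq] using this

theorem weight_nonneg (p : ℕ → ℝ) (hp : ∀ i, 0 ≤ p i ∧ p i < 1) (n : ℕ) (ω : Sample n) :
    0 ≤ sampleWeight p ω := by
  rw [sampleWeight_eq]
  exact Finset.prod_nonneg fun e _ => fac_nonneg p hp _ e _

theorem Pr_le_one (p : ℕ → ℝ) (hp : ∀ i, 0 ≤ p i ∧ p i < 1) (n : ℕ) (P : Sample n → Prop) :
    Pr p n P ≤ 1 := by
  rw [← total_one p n]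
  unfold Pr
  refine Finset.sum_le_sum fun ω _ => ?_
  split_ifs
  · exact le_rfl
  · exact weight_nonneg p hp n ω

/-- The target event. -/
def Target {k : ℕ} (H : Sample k) (n : ℕ) (ω : Sample n) : Prop :=
  ∃ S : Finset ℕ,
          (n : ℝ) ^ (0.1 : ℝ) ≤ (S.card : ℝ) ∧
          (∀ i ∈ S, IsExactCopyAt H ω i) ∧
          (∀ i ∈ S, ∀ j ∈ S, i ≠ j → i + k ≤ j ∨ j + k ≤ i) ∧
          (∀ i ∈ S, Real.log n ≤ (i + 1 : ℝ) ∧ ((i : ℝ) + k ≤ (n : ℝ) - Real.log n))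

theorem main_bound (k : ℕ) (hk : 1 ≤ k) (p : ℕ → ℝ) (hp : ∀ i, 0 ≤ p i ∧ p i < 1)
    (n : ℕ) (hn : 8 * k ≤ n)
    (hprod : (n : ℝ) ^ ((-1 : ℝ) / (10 * (k : ℝ))) ≤ ∏ i ∈ Finset.Icc 1 n, (1 - p i))
    (H : Sample k) (hH : 0 < sampleWeight p H) (δ η : ℝ) (hδ0 : 0 < δ) (hδ : δ < 1)
    (hη : 1 ≤ (1 + η) * (1 - δ) ^ (k * k)) (hη0 : 0 ≤ η)
    (hlog : Real.log n ≤ n / 8) (μ : ℝ)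
    (hμ : μ = sampleWeight p H / (8 * k) * (n : ℝ) ^ (0.8 : ℝ))
    (hn1 : (n : ℝ) ^ (0.1 : ℝ) ≤ μ / 2) :
    1 - 4 * ((1 + 2 * (k : ℝ) ^ 2 * (Real.log n / δ)) / μ + η) ≤ Pr p n (Target H n) := by
  classical
  have hn0 : 1 ≤ n := by omega
  have hnR : (1 : ℝ) ≤ n := by exact_mod_cast hn0
  have hkR : (1 : ℝ) ≤ k := by exact_mod_cast hk
  have hnk : (8 * k : ℝ) ≤ n := by exact_mod_cast hn
  set c := sampleWeight p H with hc
  have hμ0 : 0 < μ := by rw [hμ]; positivity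
  set M := n / (4 * k) with hM
  have hM1 : k * (4 * M) ≤ n := by
    have := Nat.div_mul_le_self n (4 * k)
    rw [← hM] at this; linarith
  have hM2 : n < k * (4 * M) + 4 * k := by
    have := Nat.lt_div_mul_add (a := n) (b := 4 * k) (by omega)
    rw [← hM] at this; linarith
  have hM1R : (k : ℝ) * (4 * M) ≤ n := by exact_mod_cast hM1
  have hM2R : (n : ℝ) < k * (4 * M) + 4 * k := by exact_mod_cast hM2
  have hMge : (n : ℝ) / (8 * k) ≤ M := by
    rw [div_le_iff₀ (by positivity)]
    linarith
  have hlb : ∀ i, c * (n : ℝ) ^ (-(1 / 5) : ℝ) ≤ cylP p n H i := by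
    intro i
    refine le_trans ?_ (cylP_lower p hp n H i)
    refine mul_le_mul_of_nonneg_left ?_ hH.le
    refine le_trans (le_of_eq ?_) (pow_le_pow_left₀ (by positivity) hprod (2 * k))
    rw [← Real.rpow_natCast, ← Real.rpow_mul (by positivity)]
    congr 1
    push_cast
    field_simp
    norm_num
  set m := ∑ a ∈ Finset.Ico M (2 * M), cylP p n H (k * a) with hm
  have hmμ : μ ≤ m := by
    calc μ = (n : ℝ) / (8 * k) * (c * (n : ℝ) ^ (-(1 / 5) : ℝ)) := by
          have : (n : ℝ) ^ (0.8 : ℝ) = n * (n : ℝ) ^ (-(1 / 5) : ℝ) := by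
            conv_rhs => rw [← Real.rpow_one_add' (by positivity) (by norm_num)]
            norm_num
          rw [hμ, this]; ring
      _ ≤ M * (c * (n : ℝ) ^ (-(1 / 5) : ℝ)) := mul_le_mul_of_nonneg_right hMge (by positivity)
      _ = ∑ a ∈ Finset.Ico M (2 * M), (c * (n : ℝ) ^ (-(1 / 5) : ℝ)) := by
          rw [Finset.sum_const, Nat.card_Ico, nsmul_eq_mul]
          congr 2
          omega
      _ ≤ m := Finset.sum_le_sum fun a _ => hlb _
  have hm0 : 0 < m := hμ0.trans_le hmμ
  have hlogn : 0 ≤ Real.log n := Real.log_nonneg hnR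
  have hKpos : 0 ≤ 1 + 2 * (k : ℝ) ^ 2 * (Real.log n / δ) := by positivity
  have key := second_moment (fun ω : Sample n => sampleWeight p ω) (weight_nonneg p hp n)
    (total_one p n) (Finset.Ico M (2 * M))
    (fun a ω => ∀ e ∈ blockE k n (k * a), ω e = pat n H (k * a) e)
    (fun a => cylP p n H (k * a)) (fun a _ => ?_)
    (fun a b => a = b ∨ ∃ e ∈ blockE k n (k * a) ∩ blockE k n (k * b), δ < eq' p n e)
    (1 + 2 * (k : ℝ) ^ 2 * (Real.log n / δ)) η hη0
    (fun a _ => ?_) ?_ m hm0 rfl (Target H n) ?_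
  · refine le_trans ?_ (key.trans (le_of_eq ?_))
    · have := div_le_div_of_nonneg_left hKpos hμ0 hmμ
      linarith
    · unfold Pr
      refine Finset.sum_congr rfl fun ω _ => ?_
      congr
  · simp only [sampleWeight_eq]
    exact cyl_sum _ _ _ _ (fun ω => Iff.rfl)
  · convert bad_card k hk p hp n hn0 hprod δ hδ0 (Finset.Ico M (2 * M)) a
  · intro a _ b _ hb
    push Not at hb
    refine joint_le p hp n H (k * a) (k * b) ?_ δ η hδ0.le hδ hη hη0 hb.2 _ (fun ω => Iff.rfl)
    rcases lt_or_gt_of_ne hb.1 with h | h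
    · left; nlinarith
    · right; nlinarith
  · intro ω hω
    refine ⟨((Finset.Ico M (2 * M)).filter
      (fun a => ∀ e ∈ blockE k n (k * a), ω e = pat n H (k * a) e)).image (fun a => k * a),
      ?_, ?_, ?_, ?_⟩
    · rw [Finset.card_image_of_injective _ (fun a b h => Nat.eq_of_mul_eq_mul_left (by omega) h)]
      refine le_trans (by linarith) (hω.trans (le_of_eq ?_))
      congr
    · intro i hi
      obtain ⟨a, ha, rfl⟩ := Finset.mem_image.1 hi
      obtain ⟨ha1, ha2⟩ := Finset.mem_filter.1 ha
      have ha3 := (Finset.mem_Ico.1 ha1).2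
      refine exact_of_cyl H ω _ ?_ ha2
      nlinarith
    · intro i hi j hj hij
      obtain ⟨a, ha, rfl⟩ := Finset.mem_image.1 hi
      obtain ⟨b, hb, rfl⟩ := Finset.mem_image.1 hj
      have : a ≠ b := fun h => hij (by rw [h])
      rcases lt_or_gt_of_ne this with h | h
      · left; nlinarith
      · right; nlinarith
    · intro i hi
      obtain ⟨a, ha, rfl⟩ := Finset.mem_image.1 hi
      obtain ⟨ha1, ha2⟩ := Finset.mem_filter.1 ha
      obtain ⟨ha3, ha4⟩ := Finset.mem_Ico.1 ha1
      have h3 : (k : ℝ) * M ≤ k * a := by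
        exact_mod_cast Nat.mul_le_mul_left k ha3
      have h4 : (k : ℝ) * a + k ≤ k * (2 * M) := by
        have : k * a + k ≤ k * (2 * M) := by nlinarith
        exact_mod_cast this
      push_cast
      constructor <;> linarith

theorem final (k : ℕ) (hk : 1 ≤ k) (p : ℕ → ℝ) (hp : ∀ i, 0 ≤ p i ∧ p i < 1)
    (hprod : ∀ n : ℕ, 1 ≤ n →
      (n : ℝ) ^ ((-1 : ℝ) / (10 * (k : ℝ))) ≤ ∏ i ∈ Finset.Icc 1 n, (1 - p i))
    (H : Sample k) (hH : 0 < sampleWeight p H) :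
    Tendsto (fun n => Pr p n (Target H n)) atTop (nhds 1) := by
  rw [Metric.tendsto_nhds]
  intro ε hε
  have hkR : (1 : ℝ) ≤ k := by exact_mod_cast hk
  obtain ⟨δ, hδη, hδ1, hδ0⟩ : ∃ δ : ℝ, 1 ≤ (1 + ε / 8) * (1 - δ) ^ (k * k) ∧ δ < 1 ∧ 0 < δ := by
    have hcont : Tendsto (fun δ : ℝ => (1 + ε / 8) * (1 - δ) ^ (k * k)) (nhds 0)
        (nhds ((1 + ε / 8) * (1 - 0) ^ (k * k))) :=
      Continuous.tendsto (by fun_prop) 0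
    have h1 : ∀ᶠ δ : ℝ in nhds 0, 1 < (1 + ε / 8) * (1 - δ) ^ (k * k) :=
      hcont.eventually_const_lt (by simp; positivity)
    have h2 : ∀ᶠ δ : ℝ in nhds 0, δ < 1 := eventually_lt_nhds one_pos
    have h3 : ∀ᶠ δ : ℝ in nhdsWithin 0 (Set.Ioi 0), 0 < δ := self_mem_nhdsWithin
    obtain ⟨δ, ⟨h4, h5⟩, h6⟩ := (((h1.and h2).filter_mono nhdsWithin_le_nhds).and h3).exists
    exact ⟨δ, h4.le, h5, h6⟩
  set c0 := sampleWeight p H / (8 * k) with hc0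
  have hc0pos : 0 < c0 := by positivity
  have hcast : Tendsto (fun n : ℕ => (n : ℝ)) atTop atTop := tendsto_natCast_atTop_atTop
  have hA : ∀ᶠ n : ℕ in atTop, Real.log n ≤ (n : ℝ) / 8 := by
    have := (Real.isLittleO_log_id_atTop.bound (show (0 : ℝ) < 1 / 8 by norm_num))
    filter_upwards [hcast.eventually this] with n h
    simp only [Real.norm_eq_abs, id] at h
    rw [abs_of_nonneg (Nat.cast_nonneg n : (0 : ℝ) ≤ n)] at h
    linarith [le_abs_self (Real.log n)]
  have hB : ∀ᶠ n : ℕ in atTop, 2 / c0 ≤ (n : ℝ) ^ (0.7 : ℝ) :=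
    ((tendsto_rpow_atTop (by norm_num : (0 : ℝ) < 0.7)).comp hcast).eventually_ge_atTop _
  have hC : ∀ᶠ n : ℕ in atTop, 1 / (ε / 32 * c0) ≤ (n : ℝ) ^ (0.8 : ℝ) :=
    ((tendsto_rpow_atTop (by norm_num : (0 : ℝ) < 0.8)).comp hcast).eventually_ge_atTop _
  have hD : ∀ᶠ n : ℕ in atTop,
      Real.log n ≤ (ε / 32 * c0 / (2 * (k : ℝ) ^ 2 / δ)) * (n : ℝ) ^ (0.8 : ℝ) := by
    have := ((isLittleO_log_rpow_atTop (by norm_num : (0 : ℝ) < 0.8)).bound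
      (show (0 : ℝ) < ε / 32 * c0 / (2 * (k : ℝ) ^ 2 / δ) by positivity))
    filter_upwards [hcast.eventually this] with n h
    simp only [Real.norm_eq_abs] at h
    rw [abs_of_nonneg (by positivity : (0 : ℝ) ≤ (n : ℝ) ^ (0.8 : ℝ))] at h
    exact (le_abs_self _).trans h
  filter_upwards [hA, hB, hC, hD, eventually_ge_atTop (8 * k)] with n hA hB hC hD hn
  have hn0 : 1 ≤ n := by omega
  have hnR : (0 : ℝ) < n := by exact_mod_cast hn0
  have hx : 0 < (n : ℝ) ^ (0.8 : ℝ) := by positivity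
  have h1 := main_bound k hk p hp n hn (hprod n hn0) H hH δ (ε / 8) hδ0 hδ1 hδη (by positivity)
    hA (c0 * (n : ℝ) ^ (0.8 : ℝ)) rfl (by
      have : (n : ℝ) ^ (0.8 : ℝ) = (n : ℝ) ^ (0.7 : ℝ) * (n : ℝ) ^ (0.1 : ℝ) := by
        rw [← Real.rpow_add hnR]; norm_num
      rw [this]
      rw [div_le_iff₀ hc0pos] at hB
      have hy : 0 < (n : ℝ) ^ (0.1 : ℝ) := by positivity
      nlinarith [mul_le_mul_of_nonneg_right hB hy.le])
  have h2 := Pr_le_one p hp n (Target H n)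
  have h3 : (1 + 2 * (k : ℝ) ^ 2 * (Real.log n / δ)) / (c0 * (n : ℝ) ^ (0.8 : ℝ)) ≤ ε / 16 := by
    rw [div_le_iff₀ (by positivity)]
    rw [div_le_iff₀ (by positivity)] at hC
    have h4 : 2 * (k : ℝ) ^ 2 * (Real.log n / δ) ≤ ε / 32 * c0 * (n : ℝ) ^ (0.8 : ℝ) := by
      rw [div_mul_eq_mul_div, le_div_iff₀ (by positivity)] at hD
      calc 2 * (k : ℝ) ^ 2 * (Real.log n / δ) = Real.log n * (2 * (k : ℝ) ^ 2 / δ) := by ring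
        _ ≤ _ := hD
    nlinarith
  rw [Real.dist_eq, abs_lt]
  constructor <;> linarith

end Helpers

/-- the Lemma.  Let `k ≥ 1` and let `p̄` with `0 ≤ p i < 1` satisfy
`∏_{i=1}^n (1 - p i) ≥ n ^ (-1/(10k))`.  If `H` is an admissible graph on `[k]` (i.e. the
probability `sampleWeight p H` that `G(k, p̄) = H` is positive), then with probability tending
to `1` the graph `G(n, p̄)` contains at least `n^0.1` pairwise vertex-disjoint exact copies
of `H`, none of them containing vertices smaller than `log n` or larger than `n - log n`. -/
theorem statement_3 (k : ℕ) (hk : 1 ≤ k) (p : ℕ → ℝ) (hp : ∀ i, 0 ≤ p i ∧ p i < 1)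
    (hprod : ∀ n : ℕ, 1 ≤ n →
      (n : ℝ) ^ ((-1 : ℝ) / (10 * (k : ℝ))) ≤ ∏ i ∈ Finset.Icc 1 n, (1 - p i))
    (H : Sample k) (hH : 0 < sampleWeight p H) :
    Tendsto (fun n => Pr p n fun ω =>
        ∃ S : Finset ℕ,
          (n : ℝ) ^ (0.1 : ℝ) ≤ (S.card : ℝ) ∧
          (∀ i ∈ S, IsExactCopyAt H ω i) ∧
          (∀ i ∈ S, ∀ j ∈ S, i ≠ j → i + k ≤ j ∨ j + k ≤ i) ∧
          (∀ i ∈ S, Real.log n ≤ (i + 1 : ℝ) ∧ ((i : ℝ) + k ≤ (n : ℝ) - Real.log n)))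
      atTop (nhds 1) := by
  exact final k hk p hp hprod H hH

end RandomGraph
end

section
/- If the sequence p̄ = (p(1), p(2), …), with 0 ≤ p(i) ≤ 1, contains only finitely many non-zero terms, then for every first-order sentence ψ of the language L_≤ the limit lim_{n→∞} Prob(n,p̄;ψ) exists. -/
open FirstOrder Filter

namespace RandomGraph

/-! ### Part 1: finite Markov chains -/
section Markov
variable {S A : Type} [Fintype S] [Fintype A]

noncomputable def markovOp (μ : A → ℝ) (δ : S → A → S) : (S → ℂ) →ₗ[ℂ] (S → ℂ) where
  toFun f s := ∑ a, μ a • f (δ s a)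
  map_add' f g := by ext s; simp [Finset.sum_add_distrib]
  map_smul' c f := by
    ext s
    simp only [Pi.smul_apply, smul_eq_mul, RingHom.id_apply, Finset.mul_sum, Complex.real_smul]
    exact Finset.sum_congr rfl fun a _ => by ring

theorem markovOp_apply (μ : A → ℝ) (δ : S → A → S) (f : S → ℂ) (s : S) :
    markovOp μ δ f s = ∑ a, μ a • f (δ s a) := rfl

theorem markovOp_norm_le (μ : A → ℝ) (δ : S → A → S) (h0 : ∀ a, 0 ≤ μ a) (h1 : ∑ a, μ a = 1)
    (f : S → ℂ) : ‖markovOp μ δ f‖ ≤ ‖f‖ := by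
  rw [pi_norm_le_iff_of_nonneg (norm_nonneg _)]
  intro s
  rw [markovOp_apply]
  calc ‖∑ a, μ a • f (δ s a)‖ ≤ ∑ a, ‖μ a • f (δ s a)‖ := norm_sum_le _ _
    _ ≤ ∑ a, μ a * ‖f‖ := by
        refine Finset.sum_le_sum fun a _ => ?_
        rw [norm_smul, Real.norm_of_nonneg (h0 a)]
        exact mul_le_mul_of_nonneg_left (norm_le_pi_norm f _) (h0 a)
    _ = ‖f‖ := by rw [← Finset.sum_mul, h1, one_mul]

theorem avg_extreme (μ : A → ℝ) (h0 : ∀ a, 0 ≤ μ a) (h1 : ∑ a, μ a = 1) (g : A → ℂ) (c : ℂ)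
    (hg : ∀ a, ‖g a‖ ≤ ‖c‖) (hc : ∑ a, μ a • g a = c) (a : A) (ha : 0 < μ a) : g a = c := by
  have key : ∑ a, μ a * (‖c‖ ^ 2 - inner ℝ c (g a)) = 0 := by
    have : inner ℝ c (∑ a, μ a • g a) = ‖c‖ ^ 2 := by rw [hc, real_inner_self_eq_norm_sq]
    rw [inner_sum] at this
    simp only [inner_smul_right] at this
    simp only [mul_sub, Finset.sum_sub_distrib, ← Finset.sum_mul, h1, this]
    simp
  have hin : ∀ a, inner ℝ c (g a) ≤ ‖c‖ ^ 2 := fun a =>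
    (real_inner_le_norm _ _).trans (by nlinarith [hg a, norm_nonneg c])
  have h2 := (Finset.sum_eq_zero_iff_of_nonneg (fun a _ =>
    mul_nonneg (h0 a) (sub_nonneg.2 (hin a)))).1 key a (Finset.mem_univ a)
  have h3 : inner ℝ c (g a) = ‖c‖ ^ 2 := by
    rcases mul_eq_zero.1 h2 with h | h
    · exact absurd h ha.ne'
    · linarith
  have h4 := norm_sub_sq_real c (g a)
  have h5 : ‖c - g a‖ ^ 2 ≤ 0 := by
    rw [h4, h3]; nlinarith [hg a, norm_nonneg c, norm_nonneg (g a)]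
  have h6 : ‖c - g a‖ = 0 := by
    have := sq_nonneg ‖c - g a‖
    exact pow_eq_zero_iff (two_ne_zero) |>.1 (le_antisymm h5 this)
  exact (sub_eq_zero.1 (norm_eq_zero.1 h6)).symm

theorem markovOp_eigen (μ : A → ℝ) (δ : S → A → S) (h0 : ∀ a, 0 ≤ μ a) (h1 : ∑ a, μ a = 1)
    (N : ℕ) (hN : ∀ a s, (fun s => δ s a)^[N+1] s = (fun s => δ s a)^[N] s)
    (f : S → ℂ) (hf : f ≠ 0) (l : ℂ) (hl : 1 ≤ ‖l‖) (he : markovOp μ δ f = l • f) : l = 1 := by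
  obtain ⟨a, ha⟩ : ∃ a, 0 < μ a := by
    by_contra! h
    have : ∑ a, μ a ≤ 0 := Finset.sum_nonpos fun a _ => h a
    linarith
  obtain ⟨s1, hs1⟩ : ∃ s, f s ≠ 0 := by
    by_contra! h
    exact hf (funext h)
  have : Nonempty S := ⟨s1⟩
  obtain ⟨s, hs⟩ := Finite.exists_max (fun s => ‖f s‖)
  have hpos : f s ≠ 0 := by
    intro h
    have := hs s1
    rw [h, norm_zero] at this
    exact hs1 (norm_le_zero_iff.1 this)
  have step : ∀ s', ‖f s'‖ = ‖f s‖ → f (δ s' a) = l * f s' := by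
    intro s' h
    refine avg_extreme μ h0 h1 (fun a => f (δ s' a)) (l * f s') ?_ ?_ a ha
    · intro b
      refine (hs _).trans ?_
      rw [norm_mul, h]
      nlinarith [norm_nonneg (f s)]
    · have := congrFun he s'
      rw [markovOp_apply] at this
      simpa using this
  have iter : ∀ k, f ((fun s => δ s a)^[k] s) = l ^ k * f s ∧
      ‖f ((fun s => δ s a)^[k] s)‖ = ‖f s‖ := by
    intro k
    induction k with
    | zero => simp
    | succ k ih =>
      have h := step _ ih.2
      rw [Function.iterate_succ_apply']
      refine ⟨by rw [h, ih.1]; ring, le_antisymm (hs _) ?_⟩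
      rw [h, norm_mul, ih.2]
      nlinarith [norm_nonneg (f s)]
  have e1 := (iter (N+1)).1
  rw [hN a s, (iter N).1, pow_succ] at e1
  have hl0 : l ≠ 0 := by rintro rfl; norm_num at hl
  have e2 := mul_right_cancel₀ hpos e1
  have : l ^ N * 1 = l ^ N * l := by rw [mul_one]; exact e2
  exact (mul_left_cancel₀ (pow_ne_zero N hl0) this).symm

theorem tendsto_zero_rec (x e : ℕ → ℝ) (r : ℝ) (hr0 : 0 ≤ r) (hr : r < 1) (hx : ∀ n, 0 ≤ x n)
    (h : ∀ n, x (n+1) ≤ r * x n + e n) (he : Tendsto e atTop (nhds 0)) :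
    Tendsto x atTop (nhds 0) := by
  rw [Metric.tendsto_atTop]
  intro ε hε
  have : ∀ᶠ n in atTop, e n < (ε/2) * (1-r) :=
    he.eventually_lt_const (by have : 0 < 1 - r := by linarith
                               positivity)
  obtain ⟨N, hN⟩ := eventually_atTop.1 this
  have hb : ∀ k, x (N+k) ≤ ε/2 + r^k * x N := by
    intro k
    induction k with
    | zero => simp; linarith
    | succ k ih =>
      have h1 := h (N+k)
      have h2 := hN (N+k) (by omega)
      have h3 : r * x (N+k) ≤ r * (ε/2 + r^k * x N) := mul_le_mul_of_nonneg_left ih hr0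
      rw [← add_assoc, pow_succ]
      nlinarith
  have ht : Tendsto (fun k => r^k * x N) atTop (nhds 0) := by
    simpa using (tendsto_pow_atTop_nhds_zero_of_lt_one hr0 hr).mul_const (x N)
  obtain ⟨K, hK⟩ := eventually_atTop.1 (ht.eventually_lt_const (half_pos hε))
  refine ⟨N + K, fun n hn => ?_⟩
  obtain ⟨k, rfl⟩ := Nat.exists_eq_add_of_le (show N ≤ n by omega)
  have := hb k
  have := hK k (by omega)
  rw [Real.dist_eq, sub_zero, abs_of_nonneg (hx _)]
  linarith

theorem powers_converge {E : Type} [NormedAddCommGroup E] [NormedSpace ℂ E] [FiniteDimensional ℂ E]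
    (P : Module.End ℂ E) (hP : ∀ v, ‖P v‖ ≤ ‖v‖)
    (hl : ∀ (l : ℂ) (v : E), v ≠ 0 → 1 ≤ ‖l‖ → P v = l • v → l = 1) (v : E) :
    ∃ w, Tendsto (fun n => (P ^ n) v) atTop (nhds w) := by
  have hPn : ∀ n v, ‖(P ^ n) v‖ ≤ ‖v‖ := by
    intro n
    induction n with
    | zero => simp
    | succ n ih => intro v; rw [pow_succ]; exact (ih _).trans (hP v)
  have hmem : v ∈ ⨆ l : ℂ, P.maxGenEigenspace l := by
    rw [Module.End.iSup_maxGenEigenspace_eq_top]; trivial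
  induction hmem using Submodule.iSup_induction' with
  | zero => exact ⟨0, by simp⟩
  | add x y _ _ hx hy =>
    obtain ⟨a, ha⟩ := hx
    obtain ⟨b, hb⟩ := hy
    exact ⟨a + b, by simpa using ha.add hb⟩
  | mem l v hv =>
    rw [Module.End.mem_maxGenEigenspace] at hv
    obtain ⟨k, hk⟩ := hv
    by_cases h1 : ‖l‖ < 1
    · refine ⟨0, ?_⟩
      induction k generalizing v with
      | zero => simp at hk; simp [hk]
      | succ k ih =>
        rw [pow_succ] at hk
        have h2 := ih ((P - l • 1) v) hk
        rw [tendsto_zero_iff_norm_tendsto_zero] at h2 ⊢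
        refine tendsto_zero_rec _ _ ‖l‖ (norm_nonneg _) h1 (fun n => norm_nonneg _) (fun n => ?_) h2
        have : (P ^ (n+1)) v = l • (P ^ n) v + (P ^ n) ((P - l • 1) v) := by
          rw [pow_succ]; simp
        rw [this, ← norm_smul]
        exact norm_add_le _ _
    · push Not at h1
      refine ⟨v, ?_⟩
      suffices h : P v = v by
        have : ∀ n, (P ^ n) v = v := by
          intro n
          induction n with
          | zero => simp
          | succ n ih => rw [pow_succ]; simp [h, ih]
        simp [this]
      induction k generalizing v with
      | zero => simp at hk; simp [hk]
      | succ k ih =>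
        rw [pow_succ] at hk
        have h2 := ih ((P - l • 1) v) hk
        set z := (P - l • 1) v with hz
        by_cases hl1 : l = 1
        · subst hl1
          have hz' : P v = v + z := by simp [hz]
          have h3 : ∀ n : ℕ, (P ^ n) v = v + (n : ℂ) • z := by
            intro n
            induction n with
            | zero => simp
            | succ n ih =>
              rw [pow_succ']
              simp only [Module.End.mul_apply, ih, map_add, map_smul, h2, hz']
              push_cast
              module
          have h4 : z = 0 := by
            by_contra hne
            have hp : 0 < ‖z‖ := norm_pos_iff.2 hne
            obtain ⟨n, hn⟩ := exists_nat_gt (2 * ‖v‖ / ‖z‖)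
            rw [div_lt_iff₀ hp] at hn
            have h5 : (n : ℂ) • z = (P ^ n) v - v := by rw [h3]; abel
            have h6 : ‖(n : ℂ) • z‖ ≤ ‖v‖ + ‖v‖ := by
              rw [h5]
              exact (norm_sub_le _ _).trans (by gcongr; exact hPn n v)
            rw [norm_smul] at h6
            simp at h6
            linarith
          rw [hz', h4, add_zero]
        · by_cases hv0 : v = 0
          · simp [hv0]
          by_cases hz0 : z = 0
          · exfalso
            refine hl1 (hl l v hv0 h1 ?_)
            have : P v - l • v = 0 := by rw [← hz0, hz]; simp
            exact sub_eq_zero.1 this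
          · exfalso
            have hPz : ∀ j, ((P - l • 1) ^ j) z = (1 - l) ^ j • z := by
              intro j
              induction j with
              | zero => simp
              | succ j ih =>
                rw [pow_succ']
                simp only [Module.End.mul_apply, ih, map_smul]
                simp only [LinearMap.sub_apply, LinearMap.smul_apply, Module.End.one_apply, h2]
                rw [pow_succ, mul_smul, sub_smul 1 l z, one_smul]
            have h7 : ((P - l • 1) ^ k) z = 0 := hk
            rw [hPz] at h7
            rcases smul_eq_zero.1 h7 with h8 | h8
            · exact hl1 (sub_eq_zero.1 (eq_zero_of_pow_eq_zero h8)).symm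
            · exact hz0 h8

theorem markov_converge (μ : A → ℝ) (δ : S → A → S) (h0 : ∀ a, 0 ≤ μ a) (h1 : ∑ a, μ a = 1)
    (N : ℕ) (hN : ∀ a s, (fun s => δ s a)^[N+1] s = (fun s => δ s a)^[N] s)
    (g : ℕ → S → ℝ) (hg : ∀ n s, g (n+1) s = ∑ a, μ a * g n (δ s a)) :
    ∃ w : S → ℝ, Tendsto g atTop (nhds w) := by
  obtain ⟨w, hw⟩ := powers_converge (markovOp μ δ) (markovOp_norm_le μ δ h0 h1)
    (fun l v hv hl he => markovOp_eigen μ δ h0 h1 N hN v hv l hl he) (fun s => (g 0 s : ℂ))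
  have hgn : ∀ n, ((markovOp μ δ) ^ n) (fun s => (g 0 s : ℂ)) = fun s => (g n s : ℂ) := by
    intro n
    induction n with
    | zero => simp
    | succ n ih =>
      rw [pow_succ', Module.End.mul_apply, ih]
      ext s
      rw [markovOp_apply, hg]
      push_cast
      simp
  simp only [hgn] at hw
  refine ⟨fun s => (w s).re, ?_⟩
  rw [tendsto_pi_nhds] at hw ⊢
  intro s
  exact (Complex.continuous_re.tendsto _).comp (hw s)
end Markov

/-! ### Part 2: recognizable (aperiodic) languages -/
section Rec

structure Good {B M : Type} (t : List B → M) : Prop where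
  congr : ∀ u u' v v', t u = t u' → t v = t v' → t (u ++ v) = t (u' ++ v')
  stable : ∃ N, ∀ b n, N ≤ n → t (List.replicate n b) = t (List.replicate N b)

def Rec {B : Type} (L : List B → Prop) : Prop :=
  ∃ (M : Type) (_ : Finite M) (t : List B → M), Good t ∧ ∀ u v, t u = t v → L u → L v

theorem Good.prod {B M M' : Type} {t : List B → M} {t' : List B → M'} (h : Good t) (h' : Good t') :
    Good (fun w => (t w, t' w)) := by
  refine ⟨fun u u' v v' h1 h2 => ?_, ?_⟩
  · simp only [Prod.mk.injEq] at *
    exact ⟨h.congr _ _ _ _ h1.1 h2.1, h'.congr _ _ _ _ h1.2 h2.2⟩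
  · obtain ⟨N, hN⟩ := h.stable
    obtain ⟨N', hN'⟩ := h'.stable
    refine ⟨max N N', fun b n hn => ?_⟩
    simp only [Prod.mk.injEq]
    exact ⟨by rw [hN b n (by omega), hN b (max N N') (by omega)],
      by rw [hN' b n (by omega), hN' b (max N N') (by omega)]⟩

theorem Good.map {B C M : Type} {t : List C → M} (h : Good t) (z : B → C) :
    Good (fun w => t (w.map z)) := by
  refine ⟨fun u u' v v' h1 h2 => ?_, ?_⟩
  · simp only [List.map_append]
    exact h.congr _ _ _ _ h1 h2
  · obtain ⟨N, hN⟩ := h.stable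
    exact ⟨N, fun b n hn => by simpa using hN (z b) n hn⟩

def facts {B M : Type} (t : List B → M) (w : List B) : Set (M × B × M) :=
  {x | ∃ u b v, w = u ++ b :: v ∧ x = (t u, b, t v)}

theorem facts_append_sub {B M : Type} {t : List B → M} (h : Good t) (u u' v v' : List B)
    (h1 : t u = t u') (h2 : t v = t v') (f1 : facts t u = facts t u') (f2 : facts t v = facts t v') :
    facts t (u ++ v) ⊆ facts t (u' ++ v') := by
  rintro x ⟨a, b, c, e, rfl⟩
  rw [List.append_eq_append_iff] at e
  rcases e with ⟨a', rfl, e⟩ | ⟨c', e1, e2⟩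
  · have : (t a', b, t c) ∈ facts t v' := by rw [← f2]; exact ⟨a', b, c, e, rfl⟩
    obtain ⟨p, b', q, rfl, e3⟩ := this
    simp only [Prod.mk.injEq] at e3
    obtain ⟨e3, rfl, e4⟩ := e3
    refine ⟨u' ++ p, b, q, by simp, ?_⟩
    simp only [Prod.mk.injEq]
    exact ⟨h.congr _ _ _ _ h1 e3, trivial, e4⟩
  · cases c' with
    | nil =>
      simp at e1 e2
      subst e1
      have : (t [], b, t c) ∈ facts t v' := by rw [← f2]; exact ⟨[], b, c, e2.symm, rfl⟩
      obtain ⟨p, b', q, rfl, e3⟩ := this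
      simp only [Prod.mk.injEq] at e3
      obtain ⟨e3, rfl, e4⟩ := e3
      refine ⟨u' ++ p, b, q, by simp, ?_⟩
      simp only [Prod.mk.injEq]
      refine ⟨?_, trivial, e4⟩
      have := h.congr _ _ _ _ h1 e3
      simpa using this
    | cons b0 c0 =>
      simp only [List.cons_append, List.cons.injEq] at e2
      obtain ⟨rfl, rfl⟩ := e2
      have : (t a, b, t c0) ∈ facts t u' := by rw [← f1]; exact ⟨a, b, c0, e1, rfl⟩
      obtain ⟨p, b', q, rfl, e3⟩ := this
      simp only [Prod.mk.injEq] at e3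
      obtain ⟨e3, rfl, e4⟩ := e3
      refine ⟨p, b, q ++ v', by simp, ?_⟩
      simp only [Prod.mk.injEq]
      exact ⟨e3, trivial, h.congr _ _ _ _ e4 h2⟩

theorem facts_replicate_sub {B M : Type} {t : List B → M} (N : ℕ)
    (hN : ∀ b n, N ≤ n → t (List.replicate n b) = t (List.replicate N b)) (b : B) (n n' : ℕ)
    (hn : 2 * N + 1 ≤ n) (hn' : 2 * N + 1 ≤ n') :
    facts t (List.replicate n b) ⊆ facts t (List.replicate n' b) := by
  rintro x ⟨u, c, v, e, rfl⟩
  obtain ⟨hlen, hu, hv⟩ := List.replicate_eq_append_iff.1 e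
  have hc : c = b := by
    rw [List.length_cons, List.replicate_succ] at hv
    exact (List.cons.inj hv).1
  subst hc
  have hv2 : v = List.replicate v.length c := by
    have := congrArg List.tail hv
    simpa using this
  simp only [List.length_cons] at hlen
  obtain ⟨i', j', hij, h1, h2⟩ : ∃ i' j', i' + 1 + j' = n' ∧
      t (List.replicate u.length c) = t (List.replicate i' c) ∧
      t (List.replicate v.length c) = t (List.replicate j' c) := by
    by_cases h1 : u.length < N
    · exact ⟨u.length, n' - 1 - u.length, by omega, rfl,
        by rw [hN c _ (by omega), hN c (n' - 1 - u.length) (by omega)]⟩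
    · by_cases h2 : v.length < N
      · exact ⟨n' - 1 - v.length, v.length, by omega,
          by rw [hN c _ (by omega), hN c (n' - 1 - v.length) (by omega)], rfl⟩
      · exact ⟨N, n' - 1 - N, by omega, hN c _ (by omega),
          by rw [hN c _ (by omega), hN c (n' - 1 - N) (by omega)]⟩
  refine ⟨List.replicate i' c, c, List.replicate j' c, ?_, ?_⟩
  · rw [← List.replicate_succ, List.replicate_append_replicate]; congr 1; omega
  · rw [← h1, ← h2, ← hv2, ← hu]

theorem Good.facts {B M : Type} {t : List B → M} (h : Good t) :
    Good (fun w => (t w, facts t w)) := by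
  refine ⟨fun u u' v v' h1 h2 => ?_, ?_⟩
  · simp only [Prod.mk.injEq] at *
    exact ⟨h.congr _ _ _ _ h1.1 h2.1, Set.Subset.antisymm
      (facts_append_sub h _ _ _ _ h1.1 h2.1 h1.2 h2.2)
      (facts_append_sub h _ _ _ _ h1.1.symm h2.1.symm h1.2.symm h2.2.symm)⟩
  · obtain ⟨N, hN⟩ := h.stable
    refine ⟨2 * N + 1, fun b n hn => ?_⟩
    simp only [Prod.mk.injEq]
    exact ⟨by rw [hN b n (by omega), hN b (2 * N + 1) (by omega)], Set.Subset.antisymm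
      (facts_replicate_sub N hN b _ _ hn le_rfl) (facts_replicate_sub N hN b _ _ le_rfl hn)⟩

theorem Rec.ex {B M : Type} [Finite B] [Finite M] {t : List B → M} (h : Good t)
    (R : M → B → M → Prop) : Rec (fun w => ∃ u b v, w = u ++ b :: v ∧ R (t u) b (t v)) := by
  refine ⟨M × Set (M × B × M), inferInstance, _, h.facts, ?_⟩
  rintro w w' e ⟨u, b, v, hw, hR⟩
  simp only [Prod.mk.injEq] at e
  have : (t u, b, t v) ∈ RandomGraph.facts t w' := by rw [← e.2]; exact ⟨u, b, v, hw, rfl⟩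
  obtain ⟨p, b', q, hw', e3⟩ := this
  simp only [Prod.mk.injEq] at e3
  obtain ⟨e3, rfl, e4⟩ := e3
  exact ⟨p, b, q, hw', by rw [← e3, ← e4]; exact hR⟩

theorem Rec.not {B : Type} {L : List B → Prop} (h : Rec L) : Rec (fun w => ¬ L w) := by
  obtain ⟨M, hM, t, ht, hL⟩ := h
  exact ⟨M, hM, t, ht, fun u v e h1 h2 => h1 (hL v u e.symm h2)⟩

theorem Rec.or {B : Type} {L L' : List B → Prop} (h : Rec L) (h' : Rec L') :
    Rec (fun w => L w ∨ L' w) := by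
  obtain ⟨M, hM, t, ht, hL⟩ := h
  obtain ⟨M', hM', t', ht', hL'⟩ := h'
  refine ⟨M × M', inferInstance, _, ht.prod ht', fun u v e h1 => ?_⟩
  simp only [Prod.mk.injEq] at e
  exact h1.imp (hL _ _ e.1) (hL' _ _ e.2)

theorem Rec.const {B : Type} (P : Prop) : Rec (fun _ : List B => P) :=
  ⟨Unit, inferInstance, fun _ => (), ⟨fun _ _ _ _ _ _ => rfl, 0, fun _ _ _ => rfl⟩,
    fun _ _ _ h => h⟩

theorem Rec.proj {B C : Type} [Finite B] {L : List C → Prop} (h : Rec L) (z o : B → C) :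
    Rec (fun w : List B => ∃ u b v, w = u ++ b :: v ∧ L (u.map z ++ o b :: v.map z)) := by
  obtain ⟨M, hM, t, ht, hL⟩ := h
  have := Rec.ex (ht.map z) (fun m b m' => ∃ u v : List B, t (u.map z) = m ∧ t (v.map z) = m' ∧
    L (u.map z ++ o b :: v.map z))
  convert this using 2 with w
  constructor
  · rintro ⟨u, b, v, hw, h⟩
    exact ⟨u, b, v, hw, u, v, rfl, rfl, h⟩
  · rintro ⟨u, b, v, hw, u', v', e1, e2, h⟩
    refine ⟨u, b, v, hw, hL _ _ ?_ h⟩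
    refine ht.congr _ _ _ _ e1 ?_
    exact ht.congr [o b] [o b] _ _ rfl e2

theorem good_any {B : Type} (q : B → Bool) : Good (fun w : List B => w.any q) := by
  refine ⟨fun u u' v v' h1 h2 => ?_, 1, fun b n hn => ?_⟩
  · simp only [List.any_append, h1, h2]
  · simp only [List.any_replicate]
    rw [if_neg (by omega), if_neg (by omega)]

theorem good_take {B : Type} (D : ℕ) :
    Good (fun w : List B => (⟨w.take D, by simp⟩ : {l : List B // l.length ≤ D})) := by
  refine ⟨fun u u' v v' h1 h2 => ?_, D, fun b n hn => ?_⟩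
  · simp only [Subtype.mk.injEq] at *
    have key : ∀ a b : List B, (a ++ b).take D = (a.take D ++ b.take D).take D := by
      intro a b
      rw [List.take_append, List.take_append, List.take_take, List.take_take]
      congr 1
      · simp
      · rw [List.length_take]; congr 1; omega
    rw [key u v, key u' v', h1, h2]
  · simp [hn]

instance {B : Type} [Finite B] (D : ℕ) : Finite {l : List B // l.length ≤ D} :=
  (List.finite_length_le B D).to_subtype

end Rec
/-! ### Part 3: random graphs as words -/
section Words

def letter (D : ℕ) {n : ℕ} (ω : Sample n) (p : Fin n) : Fin D → Bool := fun d =>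
  if h : d.val + 1 ≤ p.val then
    ω ⟨(⟨p.val - (d.val + 1), by omega⟩, p), by rw [Fin.lt_def]; simp; omega⟩
  else false

def word (D : ℕ) {n r : ℕ} (ω : Sample n) (x : Fin r → Fin n) :
    List ((Fin D → Bool) × (Fin r → Bool)) :=
  List.ofFn fun p => (letter D ω p, fun i => decide (x i = p))

def Short (D : ℕ) {n : ℕ} (ω : Sample n) : Prop :=
  ∀ e, ω e = true → e.1.2.val - e.1.1.val ≤ D

theorem letter_true_iff (D : ℕ) {n : ℕ} (ω : Sample n) (p : Fin n) (d : Fin D) :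
    letter D ω p d = true ↔ ∃ e : EdgeIdx n, ω e = true ∧ e.1.2 = p ∧ e.1.1.val + d.val + 1 = p.val := by
  unfold letter
  constructor
  · intro h
    split_ifs at h with h1
    exact ⟨_, h, rfl, by simp; omega⟩
  · rintro ⟨⟨⟨a, b⟩, hab⟩, he, rfl, h2⟩
    simp only at h2
    rw [dif_pos (by simp only; omega)]
    rw [← he]
    congr 3
    ext
    simp only
    omega

theorem adj_iff (D : ℕ) {n : ℕ} (ω : Sample n) (hω : Short D ω) (a b : Fin n) :
    sampleAdj ω a b ↔
      (∃ d : Fin D, a.val + d.val + 1 = b.val ∧ letter D ω b d = true) ∨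
      (∃ d : Fin D, b.val + d.val + 1 = a.val ∧ letter D ω a d = true) := by
  have key : ∀ a b : Fin n, (∃ d : Fin D, a.val + d.val + 1 = b.val ∧ letter D ω b d = true) ↔
      ∃ e : EdgeIdx n, ω e = true ∧ e.1.1.val = a ∧ e.1.2.val = b := by
    intro a b
    constructor
    · rintro ⟨d, h1, h2⟩
      obtain ⟨e, he, h3, h4⟩ := (letter_true_iff D ω b d).1 h2
      exact ⟨e, he, by omega, by rw [h3]⟩
    · rintro ⟨e, he, h1, h2⟩
      have h3 := hω e he
      have h4 : e.1.1.val < e.1.2.val := e.2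
      exact ⟨⟨b.val - a.val - 1, by omega⟩, by simp only; omega,
        (letter_true_iff D ω b _).2 ⟨e, he, Fin.ext h2, by simp only; omega⟩⟩
  rw [key, key]
  unfold sampleAdj adjVal
  constructor
  · rintro ⟨e, he, h | h⟩
    · exact Or.inl ⟨e, he, h⟩
    · exact Or.inr ⟨e, he, h⟩
  · rintro (⟨e, he, h⟩ | ⟨e, he, h⟩)
    · exact ⟨e, he, Or.inl h⟩
    · exact ⟨e, he, Or.inr h⟩

theorem word_getElem? (D : ℕ) {n r : ℕ} (ω : Sample n) (x : Fin r → Fin n) (k : ℕ)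
    (b : (Fin D → Bool) × (Fin r → Bool)) : (word D ω x)[k]? = some b ↔
      ∃ h : k < n, b = (letter D ω ⟨k, h⟩, fun i => decide (x i = ⟨k, h⟩)) := by
  unfold word
  rw [List.getElem?_eq_some_iff]
  simp only [List.getElem_ofFn, List.length_ofFn]
  exact exists_congr fun h => eq_comm

theorem word_length (D : ℕ) {n r : ℕ} (ω : Sample n) (x : Fin r → Fin n) :
    (word D ω x).length = n := by simp [word]

theorem getElem?_mid {B : Type} (u v : List B) (b : B) : (u ++ b :: v)[u.length]? = some b := by
  simp

theorem getElem?_right {B : Type} (u v : List B) (b : B) (d : ℕ) :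
    (u ++ b :: v)[u.length + d + 1]? = v[d]? := by
  rw [List.getElem?_append_right (by omega)]
  rw [show u.length + d + 1 - u.length = d + 1 by omega]
  simp

theorem exists_split {B : Type} (w : List B) (k : ℕ) (b : B) (h : w[k]? = some b) :
    ∃ u v, w = u ++ b :: v ∧ u.length = k := by
  rw [List.getElem?_eq_some_iff] at h
  obtain ⟨h1, h2⟩ := h
  refine ⟨w.take k, w.drop (k+1), ?_, by simp; omega⟩
  rw [← h2, List.getElem_cons_drop, List.take_append_drop]

theorem rec_edge (D r : ℕ) (i j : Fin r) : Rec (fun w : List ((Fin D → Bool) × (Fin r → Bool)) =>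
    ∃ (u : _) (b : (Fin D → Bool) × (Fin r → Bool)) (v : _), w = u ++ b :: v ∧ (b.2 i = true ∧
      ∃ (d : Fin D) (c : (Fin D → Bool) × (Fin r → Bool)), (v.take D)[d.val]? = some c ∧ c.2 j = true ∧ c.1 d = true)) :=
  Rec.ex (good_take (B := (Fin D → Bool) × (Fin r → Bool)) D) (fun _ b m => b.2 i = true ∧
      ∃ (d : Fin D) (c : (Fin D → Bool) × (Fin r → Bool)), m.1[d.val]? = some c ∧ c.2 j = true ∧ c.1 d = true)

theorem edge_word (D : ℕ) {n r : ℕ} (ω : Sample n) (x : Fin r → Fin n) (i j : Fin r) :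
    (∃ (u : _) (b : (Fin D → Bool) × (Fin r → Bool)) (v : _), word D ω x = u ++ b :: v ∧ (b.2 i = true ∧
      ∃ (d : Fin D) (c : (Fin D → Bool) × (Fin r → Bool)), (v.take D)[d.val]? = some c ∧ c.2 j = true ∧ c.1 d = true)) ↔
    ∃ d : Fin D, (x i).val + d.val + 1 = (x j).val ∧ letter D ω (x j) d = true := by
  constructor
  · rintro ⟨u, b, v, hw, hb, d, c, hc, hj, hd⟩
    have h1 := getElem?_mid u v b
    have h2 := getElem?_right u v b d
    rw [← hw] at h1 h2
    rw [List.getElem?_take_of_lt d.2] at hc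
    rw [hc] at h2
    obtain ⟨k1, rfl⟩ := (word_getElem? D ω x _ _).1 h1
    obtain ⟨k2, rfl⟩ := (word_getElem? D ω x _ _).1 h2
    simp only [decide_eq_true_eq] at hb hj hd
    exact ⟨d, by rw [hb, hj], by rw [hj]; exact hd⟩
  · rintro ⟨d, h1, h2⟩
    have h3 := (word_getElem? D ω x (x i) _).2 ⟨(x i).2, rfl⟩
    obtain ⟨u, v, hw, hu⟩ := exists_split _ _ _ h3
    refine ⟨u, _, v, hw, by simp, d, (letter D ω (x j), fun i => decide (x i = x j)), ?_, by simp, h2⟩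
    rw [List.getElem?_take_of_lt d.2, ← getElem?_right u v, ← hw, hu, h1]
    exact (word_getElem? D ω x _ _).2 ⟨(x j).2, rfl⟩

theorem rec_le (D r : ℕ) (i j : Fin r) : Rec (fun w : List ((Fin D → Bool) × (Fin r → Bool)) =>
    ∃ u b v, w = u ++ b :: v ∧ (b.2 i = true ∧ (b.2 j = true ∨ v.any (fun c => c.2 j) = true))) :=
  Rec.ex (good_any fun c : (Fin D → Bool) × (Fin r → Bool) => c.2 j)
    (fun _ b m => b.2 i = true ∧ (b.2 j = true ∨ m = true))

theorem le_word (D : ℕ) {n r : ℕ} (ω : Sample n) (x : Fin r → Fin n) (i j : Fin r) :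
    (∃ u b v, word D ω x = u ++ b :: v ∧
      (b.2 i = true ∧ (b.2 j = true ∨ v.any (fun c => c.2 j) = true))) ↔ x i ≤ x j := by
  constructor
  · rintro ⟨u, b, v, hw, hb, h⟩
    have h1 := getElem?_mid u v b
    rw [← hw] at h1
    obtain ⟨k1, rfl⟩ := (word_getElem? D ω x _ _).1 h1
    simp only [decide_eq_true_eq] at hb h
    rcases h with h | h
    · rw [hb, h]
    · rw [List.any_eq_true] at h
      obtain ⟨c, hc, hj⟩ := h
      obtain ⟨d, hd⟩ := List.mem_iff_getElem?.1 hc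
      rw [← getElem?_right u v, ← hw] at hd
      obtain ⟨k2, rfl⟩ := (word_getElem? D ω x _ _).1 hd
      simp only [decide_eq_true_eq] at hj
      rw [hb, hj, Fin.le_def]
      simp only
      omega
  · intro h
    have h3 := (word_getElem? D ω x (x i) _).2 ⟨(x i).2, rfl⟩
    obtain ⟨u, v, hw, hu⟩ := exists_split _ _ _ h3
    refine ⟨u, _, v, hw, by simp, ?_⟩
    rcases h.eq_or_lt with h | h
    · left; simp [h]
    · right
      rw [List.any_eq_true]
      refine ⟨(letter D ω (x j), fun i => decide (x i = x j)), ?_, by simp⟩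
      rw [List.mem_iff_getElem?]
      refine ⟨(x j).val - (x i).val - 1, ?_⟩
      rw [← getElem?_right u v, ← hw, hu]
      refine (word_getElem? D ω x _ _).2 ⟨?_, ?_⟩
      · rw [Fin.lt_def] at h; omega
      · have : (⟨(x i).val + ((x j).val - (x i).val - 1) + 1,
          by rw [Fin.lt_def] at h; omega⟩ : Fin n) = x j := by
          ext; simp only; rw [Fin.lt_def] at h; omega
        rw [this]

def addMark {D r : ℕ} (m : Bool) (b : (Fin D → Bool) × (Fin r → Bool)) :
    (Fin D → Bool) × (Fin (r+1) → Bool) := (b.1, Fin.snoc (α := fun _ => Bool) b.2 m)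

theorem snoc_mark {n r : ℕ} (x : Fin r → Fin n) (y p : Fin n) :
    (fun i => decide ((Fin.snoc (α := fun _ => Fin n) x y : Fin (r+1) → Fin n) i = p)) =
    (Fin.snoc (α := fun _ => Bool) (fun i => decide (x i = p)) (decide (y = p)) :
      Fin (r+1) → Bool) := by
  ext i
  refine Fin.lastCases ?_ (fun i => ?_) i <;> simp

theorem word_snoc (D : ℕ) {n r : ℕ} (ω : Sample n) (x : Fin r → Fin n) (y : Fin n)
    (u v : List ((Fin D → Bool) × (Fin r → Bool))) (b : _)
    (hw : word D ω x = u ++ b :: v) (hu : u.length = y) :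
    word D ω (Fin.snoc (α := fun _ => Fin n) x y : Fin (r+1) → Fin n) =
      u.map (addMark false) ++ addMark true b :: v.map (addMark false) := by
  have hx : ∀ k c, (u ++ b :: v)[k]? = some c → ∃ h : k < n,
      c = (letter D ω ⟨k, h⟩, fun i => decide (x i = ⟨k, h⟩)) := by
    intro k c h
    rw [← hw] at h
    exact (word_getElem? D ω x _ _).1 h
  apply List.ext_getElem?
  intro k
  rcases lt_trichotomy k u.length with h | h | h
  · rw [List.getElem?_append_left (by simpa using h), List.getElem?_map,
      List.getElem?_eq_getElem h, Option.map_some, word_getElem?]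
    obtain ⟨hk, e⟩ := hx k u[k] (by rw [List.getElem?_append_left h, List.getElem?_eq_getElem h])
    refine ⟨hk, ?_⟩
    rw [e, snoc_mark, decide_eq_false (p := y = ⟨k, hk⟩)]
    · rfl
    · intro h; rw [h] at hu; simp at hu; omega
  · subst h
    have h1 := getElem?_mid (u.map (addMark false)) (v.map (addMark false)) (addMark true b)
    rw [List.length_map] at h1
    rw [h1, word_getElem?]
    obtain ⟨hk, e⟩ := hx _ b (getElem?_mid u v b)
    refine ⟨hk, ?_⟩
    rw [e, snoc_mark, decide_eq_true (p := y = ⟨u.length, hk⟩)]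
    · rfl
    · ext; exact hu.symm
  · obtain ⟨d, rfl⟩ := Nat.exists_eq_add_of_lt h
    have h1 := getElem?_right (u.map (addMark false)) (v.map (addMark false)) (addMark true b) d
    rw [List.length_map] at h1
    rw [h1]
    by_cases hd : d < v.length
    · rw [List.getElem?_map, List.getElem?_eq_getElem hd, Option.map_some, word_getElem?]
      obtain ⟨hk, e⟩ := hx _ v[d] (by rw [getElem?_right, List.getElem?_eq_getElem hd])
      refine ⟨hk, ?_⟩
      rw [e, snoc_mark, decide_eq_false (p := y = ⟨_, hk⟩)]
      · rfl
      · intro h; rw [h] at hu; simp only at hu; omega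
    · rw [List.getElem?_eq_none (l := List.map _ v) (by simpa using hd), List.getElem?_eq_none]
      rw [word_length, ← word_length D ω x, hw]
      simp
      omega

theorem rec_formula (D : ℕ) {r : ℕ} (φ : Lle.BoundedFormula Empty r) :
    ∃ L : List ((Fin D → Bool) × (Fin r → Bool)) → Prop, Rec L ∧
      ∀ (n : ℕ) (ω : Sample n) (_ : Short D ω) (v : Empty → Fin n) (x : Fin r → Fin n),
        (@Language.BoundedFormula.Realize Lle (Fin n) (leStructure ω) Empty r φ v x) ↔
          L (word D ω x) := by
  have hterm : ∀ {r : ℕ} (t : Lle.Term (Empty ⊕ Fin r)), ∃ i : Fin r, t = Language.Term.var (Sum.inr i) := by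
    intro r t
    cases t with
    | var a =>
      rcases a with a | a
      · exact a.elim
      · exact ⟨a, rfl⟩
    | func f _ => exact Empty.elim f
  induction φ with
  | falsum => exact ⟨fun _ => False, Rec.const _, fun _ _ _ _ _ => Iff.rfl⟩
  | @equal r t1 t2 =>
    obtain ⟨i, rfl⟩ := hterm t1
    obtain ⟨j, rfl⟩ := hterm t2
    refine ⟨_, (((rec_le D r i j).not).or (rec_le D r j i).not).not, ?_⟩
    intro n ω hω v x
    rw [le_word, le_word]
    simp only [Language.BoundedFormula.Realize, Language.Term.realize_var, Sum.elim_inr]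
    rw [not_or, not_not, not_not]
    exact le_antisymm_iff
  | @rel r l R ts =>
    cases R with
    | adj =>
      obtain ⟨i, hi⟩ := hterm (ts 0)
      obtain ⟨j, hj⟩ := hterm (ts 1)
      refine ⟨_, (rec_edge D r i j).or (rec_edge D r j i), ?_⟩
      intro n ω hω v x
      rw [edge_word, edge_word, ← adj_iff D ω hω]
      simp only [Language.BoundedFormula.Realize]
      change sampleAdj ω _ _ ↔ _
      dsimp only
      rw [hi, hj]
      rfl
    | le =>
      obtain ⟨i, hi⟩ := hterm (ts 0)
      obtain ⟨j, hj⟩ := hterm (ts 1)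
      refine ⟨_, rec_le D r i j, ?_⟩
      intro n ω hω v x
      rw [le_word]
      simp only [Language.BoundedFormula.Realize]
      change (_ : Fin n) ≤ _ ↔ _
      dsimp only
      rw [hi, hj]
      rfl
  | imp φ ψ h1 h2 =>
    obtain ⟨L1, r1, h1⟩ := h1
    obtain ⟨L2, r2, h2⟩ := h2
    refine ⟨_, r1.not.or r2, ?_⟩
    intro n ω hω v x
    rw [← h1 n ω hω v x, ← h2 n ω hω v x, ← imp_iff_not_or]
    rfl
  | @all r φ h =>
    obtain ⟨L, r1, h⟩ := h
    refine ⟨_, (r1.not.proj (addMark false) (addMark true)).not, ?_⟩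
    intro n ω hω v x
    simp only [Language.BoundedFormula.Realize]
    constructor
    · rintro hall ⟨u, b, w, hw, hn⟩
      have hlt : u.length < n := by
        rw [← word_length D ω x, hw]; simp
      apply hn
      rw [← word_snoc D ω x ⟨u.length, hlt⟩ u w b hw rfl, ← h n ω hω v]
      exact hall _
    · intro hn y
      by_contra hc
      apply hn
      have h3 := (word_getElem? D ω x y _).2 ⟨y.2, rfl⟩
      obtain ⟨u, w, hw, hu⟩ := exists_split _ _ _ h3
      refine ⟨u, _, w, hw, ?_⟩
      rw [← word_snoc D ω x y u w _ hw hu, ← h n ω hω v]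
      exact hc
end Words
/-! ### Part 4: probabilities -/
section Prob

noncomputable def bw (q : ℝ) (b : Bool) : ℝ := if b then q else 1 - q

theorem sum_bw {κ : Type} [Fintype κ] [DecidableEq κ] (q : κ → ℝ) :
    ∑ b : κ → Bool, ∏ k, bw (q k) (b k) = 1 := by
  have := Finset.prod_univ_sum (fun _ : κ => (Finset.univ : Finset Bool)) (fun k b => bw (q k) b)
  rw [Fintype.piFinset_univ] at this
  rw [← this]
  simp [bw]

theorem sum_bw_sum {κ κ' : Type} [Fintype κ] [Fintype κ'] [DecidableEq κ] [DecidableEq κ']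
    (q : κ ⊕ κ' → ℝ) (G : (κ → Bool) → (κ' → Bool) → ℝ) :
    ∑ b : κ ⊕ κ' → Bool, (∏ i, bw (q i) (b i)) * G (b ∘ Sum.inl) (b ∘ Sum.inr) =
    ∑ a : κ → Bool, ∑ c : κ' → Bool, (∏ k, bw (q (Sum.inl k)) (a k)) *
      (∏ k, bw (q (Sum.inr k)) (c k)) * G a c := by
  rw [← Fintype.sum_prod_type']
  refine Fintype.sum_equiv (Equiv.sumArrowEquivProdArrow κ κ' Bool) _ _ fun b => ?_
  rw [Fintype.prod_sum_type]
  rfl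

theorem marginal_equiv {ι κ κ' : Type} [Fintype ι] [Fintype κ] [Fintype κ']
    [DecidableEq ι] [DecidableEq κ] [DecidableEq κ'] (E : κ ⊕ κ' ≃ ι)
    (q : ι → ℝ) (G : (κ → Bool) → ℝ) :
    ∑ b : ι → Bool, (∏ i, bw (q i) (b i)) * G (fun k => b (E (Sum.inl k))) =
    ∑ a : κ → Bool, (∏ k, bw (q (E (Sum.inl k))) (a k)) * G a := by
  have h1 : ∑ b : ι → Bool, (∏ i, bw (q i) (b i)) * G (fun k => b (E (Sum.inl k))) =
      ∑ b : κ ⊕ κ' → Bool, (∏ i, bw (q (E i)) (b i)) * G (b ∘ Sum.inl) := by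
    refine Fintype.sum_equiv (Equiv.arrowCongr E.symm (Equiv.refl Bool)) _ _ fun b => ?_
    rw [← Equiv.prod_comp E]
    rfl
  rw [h1, sum_bw_sum (fun i => q (E i)) (fun a _ => G a)]
  refine Finset.sum_congr rfl fun a _ => ?_
  simp only [mul_right_comm _ _ (G a)]
  rw [← Finset.mul_sum, sum_bw (fun k => q (E (Sum.inr k))), mul_one]

theorem marginal {ι κ : Type} [Fintype ι] [Fintype κ] [DecidableEq ι] [DecidableEq κ]
    (e : κ → ι) (he : Function.Injective e) (q : ι → ℝ) (G : (κ → Bool) → ℝ) :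
    ∑ b : ι → Bool, (∏ i, bw (q i) (b i)) * G (b ∘ e) =
    ∑ a : κ → Bool, (∏ k, bw (q (e k)) (a k)) * G a := by
  classical
  obtain ⟨E, hE⟩ : ∃ E : κ ⊕ ((Set.range e)ᶜ : Set ι) ≃ ι, ∀ k, E (Sum.inl k) = e k :=
    ⟨((Equiv.ofInjective e he).sumCongr (Equiv.refl _)).trans (Equiv.Set.sumCompl (Set.range e)),
      fun k => rfl⟩
  have := marginal_equiv E q G
  simp only [hE] at this
  exact this

def ext1 {n D : ℕ} (h : D ≤ n) : EdgeIdx n ⊕ Fin D → EdgeIdx (n+1)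
  | Sum.inl e => ⟨(e.1.1.castSucc, e.1.2.castSucc), e.2⟩
  | Sum.inr d => ⟨(⟨n - (d.val + 1), by omega⟩, Fin.last n), by
      have := d.2
      change n - (d.val + 1) < n
      omega⟩

theorem ext1_inj {n D : ℕ} (h : D ≤ n) : Function.Injective (ext1 h) := by
  rintro (⟨⟨a, b⟩, hab⟩ | d) (⟨⟨a', b'⟩, hab'⟩ | d') heq
  all_goals simp only [ext1, Subtype.mk.injEq, Prod.mk.injEq, Fin.ext_iff, Fin.val_castSucc,
    Fin.val_last] at heq
  · obtain ⟨h1, h2⟩ := heq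
    have h1 := Fin.ext h1
    have h2 := Fin.ext h2
    subst h1 h2
    rfl
  · omega
  · omega
  · congr 1
    ext
    omega

theorem word_succ {n D : ℕ} (h : D ≤ n) (ω : Sample (n+1)) (x : Fin 0 → Fin (n+1)) (x' : Fin 0 → Fin n) :
    word D ω x = word D (ω ∘ ext1 h ∘ Sum.inl) x' ++ [((ω ∘ ext1 h ∘ Sum.inr), Fin.elim0)] := by
  unfold word
  rw [List.ofFn_succ', List.concat_eq_append]
  congr 1
  · congr 1
    funext p
    refine Prod.ext ?_ (Subsingleton.elim _ _)
    rfl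
  · congr 1
    refine Prod.ext ?_ (Subsingleton.elim _ _)
    funext d
    simp only [letter]
    rw [dif_pos (by simp; omega)]
    rfl

noncomputable def Ex (p : ℕ → ℝ) (D n : ℕ) (f : List ((Fin D → Bool) × (Fin 0 → Bool)) → ℝ) : ℝ :=
  ∑ ω : Sample n, sampleWeight p ω * f (word D ω Fin.elim0)

theorem Ex_succ (p : ℕ → ℝ) (D n : ℕ) (h : D ≤ n)
    (f : List ((Fin D → Bool) × (Fin 0 → Bool)) → ℝ) :
    Ex p D (n+1) f = Ex p D n (fun w => ∑ a : Fin D → Bool,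
      (∏ d, bw (p (d.val + 1)) (a d)) * f (w ++ [(a, Fin.elim0)])) := by
  have h1 := marginal (ext1 h) (ext1_inj h) (fun e => p (e.1.2.val - e.1.1.val))
    (fun b => f (word D (b ∘ Sum.inl) Fin.elim0 ++ [(b ∘ Sum.inr, Fin.elim0)]))
  rw [sum_bw_sum (fun k => p ((ext1 h k).1.2.val - (ext1 h k).1.1.val))
    (fun a c => f (word D a Fin.elim0 ++ [(c, Fin.elim0)]))] at h1
  unfold Ex
  refine Eq.trans ?_ (h1.trans ?_)
  · refine Finset.sum_congr rfl fun ω _ => ?_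
    rw [word_succ h ω Fin.elim0 Fin.elim0]
    rfl
  · refine Finset.sum_congr rfl fun ω _ => ?_
    rw [Finset.mul_sum]
    refine Finset.sum_congr rfl fun a _ => ?_
    rw [mul_assoc]
    congr 1
    congr 1
    refine Finset.prod_congr rfl fun d _ => ?_
    congr 2
    simp only [ext1, Fin.val_last]
    omega

theorem weight_zero (p : ℕ → ℝ) (D n : ℕ) (hD : ∀ i, D < i → p i = 0) (ω : Sample n)
    (h : ¬ Short D ω) : sampleWeight p ω = 0 := by
  unfold Short at h
  push Not at h
  obtain ⟨e, he, hlt⟩ := h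
  unfold sampleWeight
  refine Finset.prod_eq_zero (Finset.mem_univ e) ?_
  rw [if_pos he, hD _ hlt]

end Prob

/-- If `p̄` (with `0 ≤ p i ≤ 1`) has only finitely many non-zero terms, then
for every first-order sentence `ψ` of the language `L≤`, `Prob(n, p̄; ψ)` converges. -/
theorem statement_7 (p : ℕ → ℝ) (hp : ∀ i, 0 ≤ p i ∧ p i ≤ 1)
    (hfin : {i : ℕ | p i ≠ 0}.Finite) (ψ : Lle.Sentence) :
    ∃ ℓ : ℝ, Tendsto (fun n => ProbLe p n ψ) atTop (nhds ℓ) := by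
  classical
  obtain ⟨D, hD⟩ := hfin.bddAbove
  have hD' : ∀ i, D < i → p i = 0 := by
    intro i hi
    by_contra h
    have := hD h
    omega
  obtain ⟨L, ⟨M, hM, t, ht, hL⟩, hreal⟩ := rec_formula D ψ
  let _ : Fintype M := Fintype.ofFinite M
  let μ : (Fin D → Bool) → ℝ := fun a => ∏ d, bw (p (d.val + 1)) (a d)
  let δ : M → (Fin D → Bool) → M := fun m a =>
    if h : ∃ w, t w = m then t (h.choose ++ [(a, Fin.elim0)]) else m
  have hδ : ∀ w a, δ (t w) a = t (w ++ [(a, Fin.elim0)]) := by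
    intro w a
    have h : ∃ w', t w' = t w := ⟨w, rfl⟩
    simp only [δ]
    rw [dif_pos h]
    exact ht.congr _ _ _ _ h.choose_spec rfl
  have hδn : ∀ w a k, (fun s => δ s a)^[k] (t w) = t (w ++ List.replicate k (a, Fin.elim0)) := by
    intro w a k
    induction k with
    | zero => simp
    | succ k ih =>
      rw [Function.iterate_succ_apply', ih, hδ, List.append_assoc, List.replicate_succ']
  obtain ⟨N, hN⟩ := ht.stable
  have hN2 : ∀ a s, (fun s => δ s a)^[N+1] s = (fun s => δ s a)^[N] s := by
    intro a s
    by_cases h : ∃ w, t w = s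
    · obtain ⟨w, rfl⟩ := h
      rw [hδn, hδn]
      exact ht.congr _ _ _ _ rfl (hN _ _ (by omega))
    · have hs : δ s a = s := by simp only [δ]; rw [dif_neg h]
      rw [Function.iterate_succ_apply]
      simp only [hs]
  let g : ℕ → M → ℝ := fun k => Nat.rec (fun m => if ∃ w, t w = m ∧ L w then 1 else 0)
    (fun _ gk m => ∑ a, μ a * gk (δ m a)) k
  have hμ0 : ∀ a, 0 ≤ μ a := by
    intro a
    refine Finset.prod_nonneg fun d _ => ?_
    unfold bw
    split_ifs
    · exact (hp _).1
    · linarith [(hp (d.val + 1)).2]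
  obtain ⟨w, hw⟩ := markov_converge μ δ hμ0 (sum_bw _) N hN2 g (fun n s => rfl)
  have hEx : ∀ k j, Ex p D (D + k) (fun w => g j (t w)) = Ex p D D (fun w => g (k + j) (t w)) := by
    intro k
    induction k with
    | zero => intro j; simp
    | succ k ih =>
      intro j
      rw [← add_assoc, Ex_succ p D (D + k) (by omega)]
      have h2 := ih (j + 1)
      rw [show k + 1 + j = k + (j + 1) by omega, ← h2]
      congr 1
      funext w
      simp only [← hδ]
      rfl
  have hPr : ∀ k, ProbLe p (k + D) ψ = Ex p D D (fun w => g k (t w)) := by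
    intro k
    have h3 := hEx k 0
    rw [add_zero] at h3
    rw [← h3, add_comm k D]
    unfold ProbLe Pr Ex
    refine Finset.sum_congr rfl fun ω _ => ?_
    by_cases hs : Short D ω
    · have h4 : SatLe ω ψ ↔ L (word D ω Fin.elim0) := by
        rw [← hreal _ ω hs default]
        unfold SatLe Language.Sentence.Realize Language.Formula.Realize
        rw [Subsingleton.elim (default : Fin 0 → Fin (D + k)) Fin.elim0]
      have h5 : g 0 (t (word D ω Fin.elim0)) = if L (word D ω Fin.elim0) then 1 else 0 := by
        change (if ∃ w, t w = t (word D ω Fin.elim0) ∧ L w then (1:ℝ) else 0) = _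
        refine if_congr ?_ rfl rfl
        exact ⟨fun ⟨w, h1, h2⟩ => hL _ _ h1 h2, fun h => ⟨_, rfl, h⟩⟩
      simp only [h5]
      by_cases h6 : L (word D ω Fin.elim0)
      · rw [if_pos (h4.2 h6), if_pos h6, mul_one]
      · rw [if_neg (fun h => h6 (h4.1 h)), if_neg h6, mul_zero]
    · rw [weight_zero p D _ hD' ω hs]
      simp
  refine ⟨Ex p D D (fun v => w (t v)), ?_⟩
  rw [← tendsto_add_atTop_iff_nat D]
  simp only [hPr]
  unfold Ex
  refine tendsto_finsetSum _ fun ω _ => ?_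
  refine Tendsto.const_mul _ ?_
  exact (tendsto_pi_nhds.1 hw) _


end RandomGraph
end
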